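/- arXiv:1106.1189 — 6 statements merged into one kernel-verified Lean document; each statement's English description precedes it below -/
import Mathlib

section
/- Let k be an integer with 2 ≤ k < 1000, and define the polynomial P_k(z) = ((2π)^{2k−1}/(2k)!) ∑_{j=0}^{k} (−1)^j B_{2j} B_{2k−2j} C(2k,2j) z^{2j} + ζ(2k−1)(z^{2k−1} + (−1)^k z). Then every complex root of P_k lies on the unit circle (has absolute value 1), and all roots of P_k are simple. -/
/-- `zetaVal m = ∑_{n=1}^∞ n^{−m}`, the value of the Riemann zeta function
at the integer `m`. -/
noncomputable def zetaVal (m : ℕ) : ℝ := ∑' n : ℕ, 1 / ((n : ℝ) + 1) ^ m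

/-- The polynomial
`P_k(z) = ((2π)^{2k−1}/(2k)!) ∑_{j=0}^{k} (−1)^j B_{2j} B_{2k−2j} C(2k,2j) z^{2j}
+ ζ(2k−1)(z^{2k−1} + (−1)^k z)`, viewed as a polynomial over `ℂ`. -/
noncomputable def Ppoly (k : ℕ) : Polynomial ℂ :=
  Polynomial.C ((((2 * Real.pi) ^ (2 * k - 1) / (Nat.factorial (2 * k))) : ℝ) : ℂ) *
    ∑ j ∈ Finset.range (k + 1),
      Polynomial.C ((-1 : ℂ) ^ j * ((bernoulli (2 * j) : ℚ) : ℂ)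
        * ((bernoulli (2 * k - 2 * j) : ℚ) : ℂ)
        * ((Nat.choose (2 * k) (2 * j)) : ℂ)) * Polynomial.X ^ (2 * j)
  + Polynomial.C ((zetaVal (2 * k - 1) : ℂ)) *
      (Polynomial.X ^ (2 * k - 1) + Polynomial.C ((-1 : ℂ) ^ k) * Polynomial.X)

/-! Write `ζ_j` for Euler's value of `ζ(2j)`, with `ζ_0 = -1/2`. Up to a constant, the coefficient
of `z^{2j}` in `P_k` is `(-1)^j ζ_j ζ_{k-j}`, and almost all `ζ_j` are close to `1`. Splitting off
the alternating geometric sum shows that `(-1)^k (π/2) (1 + z²) P_k` is the sum of a polynomial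
`h_k` and `(-1)^k` times its conjugate reciprocal `h_k*` in degree `2k + 2`.

If `h_k` has no zeros in the closed unit disc, then `|h_k*| < |h_k|` inside the disc and the reverse
holds outside, so all zeros of `h_k ± h_k*` lie on the circle. They are simple because a double
zero would give `Re (z h_k' / h_k) = k + 1`, whereas every zero `a` of `h_k` contributes
`Re (z / (z - a)) < 1/2`.

By the generating function of the Bernoulli numbers, `h_k / (1 + z²)` converges to
`-πz / (exp(2πz) - 1)`, which is bounded away from `0` on the disc; the error is small enough once
`k ≥ 6`. For `2 ≤ k ≤ 5`, dividing out the zeros `±1` (present for odd `k`) and a monomial turns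
`P_k` into a real polynomial in `t = w + w⁻¹`, whose sign changes on `[-2, 2]` account for all the
zeros.
-/

open scoped ComplexConjugate

section Reflect

open Polynomial

theorem mul_natCast_mul_pow_sub_one {R : Type*} [CommSemiring R] (x : R) (n : ℕ) :
    x * (n * x ^ (n - 1)) = n * x ^ n := by
  obtain rfl | hn := eq_or_ne n 0
  · simp only [Nat.cast_zero, zero_mul, mul_zero]
  · rw [mul_left_comm, mul_pow_sub_one hn]

variable {K : Type*} [Field K]

theorem eval_reflect {n : ℕ} {p : K[X]} (hp : p.natDegree ≤ n) {z : K} (hz : z ≠ 0) :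
    (p.reflect n).eval z = z ^ n * p.eval z⁻¹ := by
  have : Invertible z⁻¹ := invertibleOfNonzero (inv_ne_zero hz)
  have h := eval₂_reflect_mul_pow (RingHom.id K) z⁻¹ n p hp
  rw [invOf_eq_inv, inv_inv] at h
  rw [← eval₂_id (p := p), ← h, eval₂_id, mul_comm, mul_assoc, ← mul_pow, inv_mul_cancel₀ hz,
    one_pow, mul_one]

theorem mul_eval_derivative_reflect {n : ℕ} {p : K[X]} (hp : p.natDegree ≤ n) {z : K}
    (hz : z ≠ 0) :
    z * (derivative (p.reflect n)).eval z =
      z ^ n * (n * p.eval z⁻¹ - z⁻¹ * (derivative p).eval z⁻¹) := by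
  refine induction_with_natDegree_le
    (fun p ↦ z * (derivative (p.reflect n)).eval z =
      z ^ n * (n * p.eval z⁻¹ - z⁻¹ * (derivative p).eval z⁻¹)) n (by simp) ?_ ?_ p hp
  · intro m c _ hm
    obtain ⟨d, rfl⟩ := Nat.exists_eq_add_of_le hm
    rw [reflect_C_mul_X_pow, revAt_le hm, Nat.add_sub_cancel_left]
    have hzm : z ^ m * z⁻¹ ^ m = 1 := by rw [← mul_pow, mul_inv_cancel₀ hz, one_pow]
    simp only [derivative_C_mul_X_pow, eval_mul, eval_C, eval_pow, eval_X, Nat.cast_add, pow_add]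
    linear_combination c * mul_natCast_mul_pow_sub_one z d +
      z ^ m * z ^ d * c * mul_natCast_mul_pow_sub_one z⁻¹ m - c * d * z ^ d * hzm
  · intro p q _ _ ihp ihq
    simp only [reflect_add, derivative_add, eval_add]
    linear_combination ihp + ihq

theorem reflect_card_prod_X_sub_C (s : Multiset K) :
    (s.map fun a ↦ X - C a).prod.reflect s.card = (s.map fun a ↦ 1 - C a * X).prod := by
  induction s using Multiset.induction with
  | empty => simp
  | cons a s ih =>
    have hX : (X - C a).reflect 1 = 1 - C a * X := by
      rw [sub_eq_add_neg, ← C_neg, reflect_add, reflect_C, reflect_one_X]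
      simp [sub_eq_add_neg]
    rw [Multiset.map_cons, Multiset.prod_cons, Multiset.card_cons, add_comm, reflect_mul _ _
      (natDegree_X_sub_C_le a) (natDegree_multiset_prod_X_sub_C_eq_card s).le, ih, hX,
      Multiset.map_cons, Multiset.prod_cons]

theorem eval_reflect_eq_prod_roots {p : K[X]} (hs : p.Splits) {n : ℕ} (hp : p.natDegree ≤ n)
    (x : K) :
    (p.reflect n).eval x =
      x ^ (n - p.natDegree) * (p.leadingCoeff * (p.roots.map fun a ↦ 1 - a * x).prod) := by
  have hshift : p.reflect n = X ^ (n - p.natDegree) * p.reflect p.natDegree := by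
    simpa [hp] using reflect_mul (1 : K[X]) p (F := n - p.natDegree) (by simp) le_rfl
  have hprod : p.reflect p.natDegree =
      C p.leadingCoeff * (p.roots.map fun a ↦ 1 - C a * X).prod := by
    conv_lhs => enter [2]; rw [hs.eq_prod_roots]
    rw [reflect_C_mul, hs.natDegree_eq_card_roots, reflect_card_prod_X_sub_C]
  rw [hshift, hprod, eval_mul, eval_mul, eval_multiset_prod, Multiset.map_map]
  simp

end Reflect

section SelfInversive

open Polynomial

/-- The conjugate-reciprocal polynomial `zⁿ * conj (p (1 / conj z))`; `n` is any upper bound for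
the degree of `p`. -/
noncomputable def conjReflect (n : ℕ) (p : ℂ[X]) : ℂ[X] :=
  (p.reflect n).map (starRingEnd ℂ)

theorem eval_conjReflect (n : ℕ) (p : ℂ[X]) (z : ℂ) :
    (conjReflect n p).eval z = conj ((p.reflect n).eval (conj z)) := by
  simpa [conjReflect] using eval_map_apply (p := p.reflect n) (starRingEnd ℂ) (conj z)

theorem eval_derivative_conjReflect (n : ℕ) (p : ℂ[X]) (z : ℂ) :
    (derivative (conjReflect n p)).eval z = conj ((derivative (p.reflect n)).eval (conj z)) := by
  rw [conjReflect, derivative_map]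
  simpa using eval_map_apply (p := derivative (p.reflect n)) (starRingEnd ℂ) (conj z)

theorem norm_one_sub_mul_conj_lt {a w : ℂ} (hw : ‖w‖ < 1) (ha : 1 < ‖a‖) :
    ‖1 - a * conj w‖ < ‖w - a‖ := by
  refine lt_of_pow_lt_pow_left₀ 2 (norm_nonneg _) ?_
  have hw2 : ‖w‖ ^ 2 < 1 := pow_lt_one₀ (norm_nonneg w) hw two_ne_zero
  have ha2 : 1 < ‖a‖ ^ 2 := one_lt_pow₀ ha two_ne_zero
  have hgap : ‖w - a‖ ^ 2 - ‖1 - a * conj w‖ ^ 2 = (1 - ‖w‖ ^ 2) * (‖a‖ ^ 2 - 1) := by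
    simp only [← Complex.normSq_eq_norm_sq, Complex.normSq_apply, Complex.sub_re, Complex.sub_im,
      Complex.mul_re, Complex.mul_im, Complex.conj_re, Complex.conj_im, Complex.one_re,
      Complex.one_im]
    ring
  linarith [mul_pos (sub_pos.2 hw2) (sub_pos.2 ha2)]

theorem prod_norm_one_sub_mul_conj_lt {w : ℂ} (hw : ‖w‖ < 1) {s : Multiset ℂ} (hs0 : s ≠ 0)
    (hs : ∀ a ∈ s, 1 < ‖a‖) :
    (s.map fun a ↦ ‖1 - a * conj w‖).prod < (s.map fun a ↦ ‖w - a‖).prod := by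
  have hlt (a : ℂ) (ha : a ∈ s) := norm_one_sub_mul_conj_lt hw (hs a ha)
  by_cases hzero : ∀ a ∈ s, 1 - a * conj w ≠ 0
  · exact Multiset.prod_map_lt_prod_map hs0 _ _ (fun a ha ↦ norm_pos_iff.2 (hzero a ha)) hlt
  · push Not at hzero
    obtain ⟨a, ha, haw⟩ := hzero
    have hprod : (s.map fun a ↦ ‖1 - a * conj w‖).prod = 0 :=
      Multiset.prod_eq_zero (Multiset.mem_map.2 ⟨a, ha, norm_eq_zero.2 haw⟩)
    rw [hprod]
    refine Multiset.prod_induction (0 < ·) _ (fun _ _ ↦ mul_pos) one_pos fun x hx ↦ ?_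
    obtain ⟨b, hb, rfl⟩ := Multiset.mem_map.1 hx
    exact (norm_nonneg _).trans_lt (hlt b hb)

theorem re_mul_one_div_sub_lt_half {a z : ℂ} (hz : ‖z‖ = 1) (ha : 1 < ‖a‖) :
    (z * (1 / (z - a))).re < 1 / 2 := by
  have hne : z - a ≠ 0 := sub_ne_zero.2 fun h ↦ by rw [← h, hz] at ha; exact lt_irrefl _ ha
  have hz2 : Complex.normSq z = 1 := by rw [Complex.normSq_eq_norm_sq, hz, one_pow]
  have ha2 : 1 < Complex.normSq a := by
    rw [Complex.normSq_eq_norm_sq]; exact one_lt_pow₀ ha two_ne_zero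
  rw [mul_one_div, Complex.div_re, ← add_div, div_lt_iff₀ (Complex.normSq_pos.2 hne)]
  simp only [Complex.normSq_apply, Complex.sub_re, Complex.sub_im] at *
  linarith

variable {h : ℂ[X]} {n : ℕ}

theorem one_lt_norm_of_mem_roots (hne : ∀ z : ℂ, ‖z‖ ≤ 1 → h.eval z ≠ 0) {a : ℂ}
    (ha : a ∈ h.roots) : 1 < ‖a‖ :=
  not_le.1 fun hle ↦ hne a hle (isRoot_of_mem_roots ha)

theorem norm_eval_conjReflect_lt (hn : 0 < n) (hdeg : h.natDegree ≤ n)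
    (hne : ∀ z : ℂ, ‖z‖ ≤ 1 → h.eval z ≠ 0) {w : ℂ} (hw : ‖w‖ < 1) :
    ‖(conjReflect n h).eval w‖ < ‖h.eval w‖ := by
  have hs := IsAlgClosed.splits h
  have hlead : 0 < ‖h.leadingCoeff‖ := norm_pos_iff.2 <| leadingCoeff_ne_zero.2 <| by
    rintro rfl; exact hne w hw.le eval_zero
  have norm_prod (f : ℂ → ℂ) : ‖(h.roots.map f).prod‖ = (h.roots.map fun a ↦ ‖f a‖).prod := by
    simpa [Multiset.map_map] using map_multiset_prod (normHom : ℂ →*₀ ℝ) (h.roots.map f)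
  have hval : ‖h.eval w‖ = ‖h.leadingCoeff‖ * (h.roots.map fun a ↦ ‖w - a‖).prod := by
    rw [hs.eval_eq_prod_roots, norm_mul, norm_prod]
  have hrefl : ‖(conjReflect n h).eval w‖ = ‖w‖ ^ (n - h.natDegree) *
      (‖h.leadingCoeff‖ * (h.roots.map fun a ↦ ‖1 - a * conj w‖).prod) := by
    rw [eval_conjReflect, Complex.norm_conj, eval_reflect_eq_prod_roots hs hdeg, norm_mul,
      norm_mul, norm_pow, Complex.norm_conj, norm_prod]
  rw [hval, hrefl]
  have hnonneg : 0 ≤ (h.roots.map fun a ↦ ‖1 - a * conj w‖).prod := by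
    rw [← norm_prod]; exact norm_nonneg _
  obtain hroots | hroots := eq_or_ne h.roots 0
  · have hd : h.natDegree = 0 := by rw [hs.natDegree_eq_card_roots, hroots, Multiset.card_zero]
    simpa [hroots, hd, hlead] using pow_lt_one₀ (norm_nonneg w) hw hn.ne'
  calc ‖w‖ ^ (n - h.natDegree) * (‖h.leadingCoeff‖ * _)
      ≤ ‖h.leadingCoeff‖ * (h.roots.map fun a ↦ ‖1 - a * conj w‖).prod :=
        mul_le_of_le_one_left (by positivity) (pow_le_one₀ (norm_nonneg w) hw.le)
    _ < _ := by
      gcongr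
      exact prod_norm_one_sub_mul_conj_lt hw hroots fun a ↦ one_lt_norm_of_mem_roots hne

theorem re_mul_logDeriv_lt (hn : 0 < n) (hdeg : h.natDegree ≤ n)
    (hne : ∀ z : ℂ, ‖z‖ ≤ 1 → h.eval z ≠ 0) {z : ℂ} (hz : ‖z‖ = 1) :
    (z * ((derivative h).eval z / h.eval z)).re < n / 2 := by
  have hs := IsAlgClosed.splits h
  rw [hs.eval_derivative_div_eval_of_ne_zero (hne z hz.le), ← Multiset.sum_map_mul_left,
    ← Complex.coe_reAddGroupHom, map_multiset_sum, Multiset.map_map]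
  obtain hroots | hroots := eq_or_ne h.roots 0
  · simpa [hroots] using hn
  calc (h.roots.map fun a ↦ (z * (1 / (z - a))).re).sum
      < (h.roots.map fun _ ↦ (1 / 2 : ℝ)).sum :=
        Multiset.sum_lt_sum_of_nonempty hroots fun a ha ↦
          re_mul_one_div_sub_lt_half hz (one_lt_norm_of_mem_roots hne ha)
    _ = h.natDegree / 2 := by
        rw [Multiset.map_const', Multiset.sum_replicate, ← hs.natDegree_eq_card_roots,
          nsmul_eq_mul, mul_one_div]
    _ ≤ n / 2 := by gcongr

theorem eval_conjReflect_of_ne_zero (hdeg : h.natDegree ≤ n) {z : ℂ} (hz : z ≠ 0) :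
    (conjReflect n h).eval z = z ^ n * conj (h.eval (conj z)⁻¹) := by
  rw [eval_conjReflect, eval_reflect hdeg ((_root_.map_ne_zero _).2 hz), map_mul, map_pow,
    Complex.conj_conj]

theorem norm_eval_lt_norm_eval_conjReflect (hn : 0 < n) (hdeg : h.natDegree ≤ n)
    (hne : ∀ z : ℂ, ‖z‖ ≤ 1 → h.eval z ≠ 0) {z : ℂ} (hz : 1 < ‖z‖) :
    ‖h.eval z‖ < ‖(conjReflect n h).eval z‖ := by
  have hz0 : z ≠ 0 := norm_pos_iff.1 (zero_lt_one.trans hz)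
  have hw : ‖(conj z)⁻¹‖ < 1 := by
    rw [norm_inv, Complex.norm_conj]; exact inv_lt_one_of_one_lt₀ hz
  have hlt := norm_eval_conjReflect_lt hn hdeg hne hw
  rw [eval_conjReflect_of_ne_zero hdeg (by simpa using hz0), map_inv₀, Complex.conj_conj, inv_inv,
    norm_mul, norm_pow, norm_inv, Complex.norm_conj, Complex.norm_conj, inv_pow,
    inv_mul_lt_iff₀ (by positivity)] at hlt
  rwa [eval_conjReflect_of_ne_zero hdeg hz0, norm_mul, norm_pow, Complex.norm_conj]

theorem mul_eval_derivative_conjReflect_of_norm_eq_one (hdeg : h.natDegree ≤ n) {z : ℂ}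
    (hz : ‖z‖ = 1) :
    z * (derivative (conjReflect n h)).eval z =
      z ^ n * (n * conj (h.eval z) - conj (z * (derivative h).eval z)) := by
  have hz0 : z ≠ 0 := norm_ne_zero_iff.1 (hz ▸ one_ne_zero)
  have hinv : (conj z)⁻¹ = z := by rw [← Complex.inv_eq_conj hz, inv_inv]
  have h1 := congrArg conj (mul_eval_derivative_reflect hdeg ((_root_.map_ne_zero conj).2 hz0))
  simp only [map_mul, map_sub, map_pow, Complex.conj_conj, map_natCast, hinv] at h1
  rw [eval_derivative_conjReflect, h1, map_mul]

/-- At a double root on the unit circle, `2 Re (z h' / h) = n`. -/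
theorem rootMultiplicity_add_conjReflect_le_one (hn : 0 < n) (hdeg : h.natDegree ≤ n)
    (hne : ∀ z : ℂ, ‖z‖ ≤ 1 → h.eval z ≠ 0) {ε : ℂ} {z : ℂ} (hz : ‖z‖ = 1)
    (hf : h + C ε * conjReflect n h ≠ 0) :
    (h + C ε * conjReflect n h).rootMultiplicity z ≤ 1 := by
  by_contra! hlt
  obtain ⟨hroot, hderiv⟩ := (one_lt_rootMultiplicity_iff_isRoot hf).1 hlt
  have hz0 : z ≠ 0 := norm_ne_zero_iff.1 (hz ▸ one_ne_zero)
  have hinv : (conj z)⁻¹ = z := by rw [← Complex.inv_eq_conj hz, inv_inv]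
  have hA : h.eval z ≠ 0 := hne z hz.le
  have hA' : conj (h.eval z) ≠ 0 := (_root_.map_ne_zero _).2 hA
  simp only [IsRoot.def, derivative_add, derivative_C_mul, eval_add, eval_mul, eval_C]
    at hroot hderiv
  have hB := mul_eval_derivative_conjReflect_of_norm_eq_one hdeg hz
  rw [eval_conjReflect_of_ne_zero hdeg hz0, hinv] at hroot
  have hsum : z * ((derivative h).eval z / h.eval z) +
      conj (z * ((derivative h).eval z / h.eval z)) = n := by
    rw [map_mul] at hB
    rw [map_mul, map_div₀]
    field_simp
    linear_combination conj (h.eval z) * (z * hderiv - ε * hB) -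
      (n * conj (h.eval z) - conj z * conj ((derivative h).eval z)) * hroot
  have hre := congrArg Complex.re hsum
  simp only [Complex.add_re, Complex.conj_re, Complex.natCast_re] at hre
  linarith [re_mul_logDeriv_lt hn hdeg hne hz]

theorem norm_eq_one_and_rootMultiplicity_eq_one_of_isRoot_add_conjReflect (hn : 0 < n)
    (hdeg : h.natDegree ≤ n) (hne : ∀ z : ℂ, ‖z‖ ≤ 1 → h.eval z ≠ 0) {ε : ℂ} (hε : ‖ε‖ = 1)
    {z : ℂ} (hz : (h + C ε * conjReflect n h).IsRoot z) :
    ‖z‖ = 1 ∧ (h + C ε * conjReflect n h).rootMultiplicity z = 1 := by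
  have hval (x : ℂ) (hx : (h + C ε * conjReflect n h).eval x = 0) :
      ‖h.eval x‖ = ‖(conjReflect n h).eval x‖ := by
    rw [eval_add, eval_mul, eval_C] at hx
    rw [eq_neg_of_add_eq_zero_left hx, norm_neg, norm_mul, hε, one_mul]
  have hf : h + C ε * conjReflect n h ≠ 0 := fun hf ↦
    (norm_eval_conjReflect_lt hn hdeg hne (w := 0) (by simp)).ne' (hval 0 (by rw [hf, eval_zero]))
  have hz1 : ‖z‖ = 1 := by
    obtain hlt | heq | hgt := lt_trichotomy ‖z‖ 1
    · exact absurd (hval z hz) (norm_eval_conjReflect_lt hn hdeg hne hlt).ne'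
    · exact heq
    · exact absurd (hval z hz) (norm_eval_lt_norm_eval_conjReflect hn hdeg hne hgt).ne
  exact ⟨hz1, le_antisymm (rootMultiplicity_add_conjReflect_le_one hn hdeg hne hz1 hf)
    ((rootMultiplicity_pos hf).2 hz)⟩

end SelfInversive

section Zeta

theorem summable_one_div_add_one_pow {m : ℕ} (hm : 2 ≤ m) :
    Summable fun n : ℕ ↦ 1 / ((n : ℝ) + 1) ^ m := by
  simpa using (summable_nat_add_iff 1).2 (Real.summable_one_div_nat_pow.2 hm)

theorem sum_range_le_zetaVal {m : ℕ} (hm : 2 ≤ m) (N : ℕ) :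
    ∑ n ∈ Finset.range N, 1 / ((n : ℝ) + 1) ^ m ≤ zetaVal m :=
  (summable_one_div_add_one_pow hm).sum_le_tsum _ fun n _ ↦ by positivity

theorem one_le_zetaVal {m : ℕ} (hm : 2 ≤ m) : 1 ≤ zetaVal m := by
  simpa using sum_range_le_zetaVal hm 1

/-- For `n > N` one has `n⁻ᵐ = n^(p - m) * n⁻ᵖ ≤ (N + 1)^(p - m) * n⁻ᵖ`. -/
theorem zetaVal_le_sum_range_add {p m : ℕ} (hp : 2 ≤ p) (hpm : p ≤ m) (N : ℕ) :
    zetaVal m ≤ ∑ n ∈ Finset.range N, 1 / ((n : ℝ) + 1) ^ m +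
      (1 / ((N : ℝ) + 1)) ^ (m - p) *
        (zetaVal p - ∑ n ∈ Finset.range N, 1 / ((n : ℝ) + 1) ^ p) := by
  have hsm := summable_one_div_add_one_pow (hp.trans hpm)
  have hsp := summable_one_div_add_one_pow hp
  rw [zetaVal, zetaVal, ← hsm.sum_add_tsum_nat_add N, ← hsp.sum_add_tsum_nat_add N,
    add_sub_cancel_left, ← tsum_mul_left]
  refine add_le_add_right (Summable.tsum_le_tsum (fun n ↦ ?_) ((summable_nat_add_iff N).2 hsm)
    (((summable_nat_add_iff N).2 hsp).mul_left _)) _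
  rw [← Nat.sub_add_cancel hpm, pow_add, Nat.add_sub_cancel, one_div_pow, one_div_mul_one_div]
  gcongr
  exact_mod_cast Nat.le_add_left N n

theorem zetaVal_eq_of_hasSum {m : ℕ} (hm : m ≠ 0) {a : ℝ}
    (h : HasSum (fun n : ℕ ↦ 1 / (n : ℝ) ^ m) a) : zetaVal m = a := by
  simpa [zetaVal, hm] using ((hasSum_nat_add_iff' 1).2 h).tsum_eq

theorem zetaVal_two : zetaVal 2 = Real.pi ^ 2 / 6 :=
  zetaVal_eq_of_hasSum two_ne_zero hasSum_zeta_two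

theorem zetaVal_four : zetaVal 4 = Real.pi ^ 4 / 90 :=
  zetaVal_eq_of_hasSum four_ne_zero hasSum_zeta_four

theorem pi_sq_lt : Real.pi ^ 2 < 9.8697 := by
  calc Real.pi ^ 2 < 3.141593 ^ 2 := by gcongr; exact Real.pi_lt_d6
    _ < 9.8697 := by norm_num

theorem zetaVal_sub_one_le {m : ℕ} (hm : 4 ≤ m) : zetaVal m - 1 ≤ 1.32 * (1 / 2) ^ m := by
  have hpi : Real.pi ^ 4 < 97.42 := by
    calc Real.pi ^ 4 < 3.141593 ^ 4 := by gcongr; exact Real.pi_lt_d6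
      _ < 97.42 := by norm_num
  have hle := zetaVal_le_sum_range_add (by norm_num) hm 1
  norm_num [zetaVal_four] at hle
  calc zetaVal m - 1 ≤ (1 / 2) ^ (m - 4) * (Real.pi ^ 4 / 90 - 1) := by linarith
    _ ≤ (1 / 2) ^ (m - 4) * (1.32 * (1 / 2) ^ 4) := by gcongr; linarith
    _ = 1.32 * (1 / 2) ^ m := by
      rw [mul_left_comm, ← pow_add, Nat.sub_add_cancel hm]

end Zeta

section EvenZeta

/-- Euler's closed form `(-1)^(j+1) B_{2j} (2π)^{2j} / (2 (2j)!)` of `ζ(2j)`. Unlike the series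
`zetaVal (2 * j)`, it has the correct value `ζ(0) = -1/2` at `j = 0`. -/
noncomputable def evenZeta (j : ℕ) : ℝ :=
  (-1) ^ (j + 1) * (bernoulli (2 * j) : ℝ) * (2 * Real.pi) ^ (2 * j) / (2 * j).factorial / 2

theorem evenZeta_zero : evenZeta 0 = -1 / 2 := by
  simp [evenZeta]

theorem evenZeta_eq_zetaVal {j : ℕ} (hj : j ≠ 0) : evenZeta j = zetaVal (2 * j) := by
  have htwo : (2 : ℝ) ^ (2 * j) = 2 ^ (2 * j - 1) * 2 := (pow_sub_one_mul (by omega) 2).symm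
  rw [zetaVal_eq_of_hasSum (by omega) (hasSum_zeta_nat hj), evenZeta, mul_pow, htwo]
  ring

theorem bernoulli_two_mul_div_factorial_mul (j : ℕ) :
    (bernoulli (2 * j) : ℝ) / (2 * j).factorial * (2 * Real.pi) ^ (2 * j) =
      -2 * ((-1) ^ j * evenZeta j) := by
  have hsign : (-1 : ℝ) ^ j * (-1) ^ j = 1 := by rw [← mul_pow]; norm_num
  rw [evenZeta, pow_succ]
  linear_combination
    -((bernoulli (2 * j) : ℝ) / (2 * j).factorial * (2 * Real.pi) ^ (2 * j)) * hsign

theorem abs_evenZeta_sub_one_le_of_two_le {j : ℕ} (hj : 2 ≤ j) :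
    |evenZeta j - 1| ≤ 1.32 * (1 / 4) ^ j := by
  have hpow : (1 / 4 : ℝ) ^ j = (1 / 2) ^ (2 * j) := by rw [pow_mul]; norm_num
  rw [evenZeta_eq_zetaVal (by omega), hpow,
    abs_of_nonneg (sub_nonneg.2 (one_le_zetaVal (by omega)))]
  exact zetaVal_sub_one_le (by omega)

theorem abs_evenZeta_sub_one_le (j : ℕ) : |evenZeta j - 1| ≤ 2.58 * (1 / 4) ^ j := by
  obtain hj | hj := lt_or_ge j 2
  · interval_cases j
    · norm_num [evenZeta_zero, abs_div]
    · rw [evenZeta_eq_zetaVal one_ne_zero, mul_one,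
        abs_of_nonneg (sub_nonneg.2 (one_le_zetaVal le_rfl)), zetaVal_two]
      linarith [pi_sq_lt]
  · exact (abs_evenZeta_sub_one_le_of_two_le hj).trans (by gcongr; norm_num)

theorem abs_mul_evenZeta_sub_one_le {i j : ℕ} (hij : 3 ≤ i + j) :
    |(evenZeta i - 1) * (evenZeta j - 1)| ≤ 3.42 * (1 / 4) ^ (i + j) := by
  wlog hj : 2 ≤ j generalizing i j
  · rw [mul_comm, add_comm]
    exact this (by omega) (by omega)
  calc |(evenZeta i - 1) * (evenZeta j - 1)|
      ≤ (2.58 * (1 / 4) ^ i) * (1.32 * (1 / 4) ^ j) := by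
        rw [abs_mul]
        gcongr
        exacts [abs_evenZeta_sub_one_le i, abs_evenZeta_sub_one_le_of_two_le hj]
    _ = 2.58 * 1.32 * (1 / 4) ^ (i + j) := by ring
    _ ≤ 3.42 * (1 / 4) ^ (i + j) := by gcongr; norm_num

end EvenZeta

section GeneratingFunction

theorem hasSum_coeff_mul_mul_pow {f g : PowerSeries ℂ} {t a b : ℂ}
    (hf : HasSum (fun n ↦ f.coeff n * t ^ n) a) (hg : HasSum (fun n ↦ g.coeff n * t ^ n) b) :
    HasSum (fun n ↦ (f * g).coeff n * t ^ n) (a * b) := by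
  have hcoeff (n : ℕ) : (f * g).coeff n * t ^ n = ∑ kl ∈ Finset.HasAntidiagonal.antidiagonal n,
      f.coeff kl.1 * t ^ kl.1 * (g.coeff kl.2 * t ^ kl.2) := by
    rw [PowerSeries.coeff_mul, Finset.sum_mul]
    refine Finset.sum_congr rfl fun kl hkl ↦ ?_
    rw [← Finset.HasAntidiagonal.mem_antidiagonal.1 hkl, pow_add]
    ring
  simp_rw [hcoeff]
  rw [← hf.tsum_eq, ← hg.tsum_eq, tsum_mul_tsum_eq_tsum_sum_antidiagonal_of_summable_norm
    hf.summable.norm hg.summable.norm]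
  exact (summable_norm_sum_mul_antidiagonal_of_summable_norm hf.summable.norm
    hg.summable.norm).of_norm.hasSum

theorem hasSum_coeff_exp_sub_one (t : ℂ) :
    HasSum (fun n ↦ (PowerSeries.exp ℂ - 1).coeff n * t ^ n) (Complex.exp t - 1) := by
  have hexp : HasSum (fun n ↦ (PowerSeries.exp ℂ).coeff n * t ^ n) (Complex.exp t) := by
    rw [Complex.exp_eq_exp_ℂ]
    simpa [PowerSeries.coeff_exp, div_eq_inv_mul] using NormedSpace.expSeries_div_hasSum_exp t
  have hone : HasSum (fun n ↦ (1 : PowerSeries ℂ).coeff n * t ^ n) 1 := by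
    simpa using hasSum_single (f := fun n ↦ (1 : PowerSeries ℂ).coeff n * t ^ n) 0
      fun n hn ↦ by simp [PowerSeries.coeff_one, hn]
  simpa [sub_mul] using hexp.sub hone

theorem mul_exp_sub_one_of_hasSum_bernoulliPowerSeries {t s : ℂ}
    (h : HasSum (fun n ↦ (bernoulliPowerSeries ℂ).coeff n * t ^ n) s) :
    s * (Complex.exp t - 1) = t := by
  have hX : HasSum (fun n ↦ (PowerSeries.X : PowerSeries ℂ).coeff n * t ^ n) t := by
    simpa using hasSum_single (f := fun n ↦ (PowerSeries.X : PowerSeries ℂ).coeff n * t ^ n) 1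
      fun n hn ↦ by simp [PowerSeries.coeff_X, hn]
  have hmul := hasSum_coeff_mul_mul_pow h (hasSum_coeff_exp_sub_one t)
  rw [bernoulliPowerSeries_mul_exp_sub_one] at hmul
  exact hmul.unique hX

theorem hasSum_neg_one_pow_mul_pow {z : ℂ} (hz : ‖z‖ < 1) :
    HasSum (fun j : ℕ ↦ (-1 : ℂ) ^ j * z ^ (2 * j)) (1 + z ^ 2)⁻¹ := by
  have hz2 : ‖-z ^ 2‖ < 1 := by
    rw [norm_neg, norm_pow]; exact pow_lt_one₀ (norm_nonneg z) hz two_ne_zero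
  simpa [neg_pow (z ^ 2), ← pow_mul] using hasSum_geometric_of_norm_lt_one hz2

theorem norm_evenZeta_sub_one_mul_pow_le {z : ℂ} (hz : ‖z‖ ≤ 1) (j : ℕ) :
    ‖(-1 : ℂ) ^ j * (evenZeta j - 1) * z ^ (2 * j)‖ ≤ |evenZeta j - 1| := by
  rw [norm_mul, norm_mul, norm_pow, norm_pow, norm_neg, norm_one, one_pow, one_mul,
    ← Complex.ofReal_one, ← Complex.ofReal_sub, Complex.norm_real, Real.norm_eq_abs]
  exact mul_le_of_le_one_right (abs_nonneg _) (pow_le_one₀ (norm_nonneg z) hz)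

theorem summable_evenZeta_sub_one {z : ℂ} (hz : ‖z‖ ≤ 1) :
    Summable fun j : ℕ ↦ (-1 : ℂ) ^ j * (evenZeta j - 1) * z ^ (2 * j) :=
  .of_norm_bounded
    ((summable_geometric_of_lt_one (by norm_num) (by norm_num : (1 / 4 : ℝ) < 1)).mul_left 2.58)
    fun j ↦ (norm_evenZeta_sub_one_mul_pow_le hz j).trans (abs_evenZeta_sub_one_le j)

theorem hasSum_bernoulliPowerSeries {z s : ℂ}
    (h : HasSum (fun j : ℕ ↦ (-1 : ℂ) ^ j * evenZeta j * z ^ (2 * j)) s) :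
    HasSum (fun n ↦ (bernoulliPowerSeries ℂ).coeff n * (2 * Real.pi * z) ^ n)
      (-2 * s + -(Real.pi * z)) := by
  refine HasSum.even_add_odd ?_ ?_
  · refine (h.mul_left (-2)).congr_fun fun j ↦ ?_
    have hj := congrArg Complex.ofReal (bernoulli_two_mul_div_factorial_mul j)
    push_cast at hj
    simp only [bernoulliPowerSeries, PowerSeries.coeff_mk, map_div₀, map_natCast, eq_ratCast,
      mul_pow]
    linear_combination z ^ (2 * j) * hj
  · refine (hasSum_ite_eq 0 (-(Real.pi * z) : ℂ)).congr_fun fun j ↦ ?_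
    split_ifs with hj
    · simp [hj, bernoulliPowerSeries]
      ring
    · simp [bernoulliPowerSeries, bernoulli_eq_zero_of_odd ⟨j, rfl⟩ (by omega)]

theorem tsum_evenZeta_sub_one_mul_exp_sub_one {z : ℂ} (hz : ‖z‖ < 1) :
    (-2 * (∑' j : ℕ, (-1 : ℂ) ^ j * (evenZeta j - 1) * z ^ (2 * j) + (1 + z ^ 2)⁻¹) +
      -(Real.pi * z)) * (Complex.exp (2 * Real.pi * z) - 1) = 2 * Real.pi * z := by
  have hadd := (summable_evenZeta_sub_one hz.le).hasSum.add (hasSum_neg_one_pow_mul_pow hz)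
  simp_rw [← add_mul, ← mul_add_one, sub_add_cancel] at hadd
  exact mul_exp_sub_one_of_hasSum_bernoulliPowerSeries (hasSum_bernoulliPowerSeries hadd)

theorem exp_two_pi_mul_sub_one_ne_zero {z : ℂ} (hz0 : z ≠ 0) (hz : ‖z‖ < 1) :
    Complex.exp (2 * Real.pi * z) - 1 ≠ 0 := fun h0 ↦ by
  simpa [h0, hz0, Real.pi_ne_zero] using tsum_evenZeta_sub_one_mul_exp_sub_one hz

theorem tsum_evenZeta_sub_one {z : ℂ} (hz0 : z ≠ 0) (hz : ‖z‖ < 1) :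
    ∑' j : ℕ, (-1 : ℂ) ^ j * (evenZeta j - 1) * z ^ (2 * j) =
      -(Real.pi * z / (Complex.exp (2 * Real.pi * z) - 1)) - Real.pi / 2 * z - (1 + z ^ 2)⁻¹ := by
  have hdiv := eq_div_of_mul_eq (exp_two_pi_mul_sub_one_ne_zero hz0 hz)
    (tsum_evenZeta_sub_one_mul_exp_sub_one hz)
  linear_combination -hdiv / 2

end GeneratingFunction

section ExpBound

theorem norm_exp_mul_sub_one_le {a : ℝ} (ha : 0 ≤ a) {z : ℂ} (hz : ‖z‖ ≤ 1) :
    ‖Complex.exp (a * z) - 1‖ ≤ ‖z‖ * (Real.exp a - 1) := by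
  have hnorm : ‖(a * z : ℂ)‖ = ‖z‖ * a := by
    rw [norm_mul, Complex.norm_real, Real.norm_of_nonneg ha, mul_comm]
  calc ‖Complex.exp (a * z) - 1‖ ≤ Real.exp (‖z‖ * a) - 1 := by
        simpa only [hnorm, Finset.sum_range_one, pow_zero, Nat.factorial_zero, Nat.cast_one,
          div_one] using Complex.norm_exp_sub_sum_le_exp_norm_sub_sum (a * z) 1
    _ ≤ ‖z‖ * (Real.exp a - 1) := by
        have hconv := convexOn_exp.2 (Set.mem_univ a) (Set.mem_univ 0) (norm_nonneg z)
          (sub_nonneg.2 hz) (add_sub_cancel _ _)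
        simp only [smul_eq_mul, mul_zero, add_zero, Real.exp_zero, mul_one] at hconv
        linarith

theorem exp_two_mul_pi_le : Real.exp (2 * Real.pi) ≤ 666 := by
  calc Real.exp (2 * Real.pi) ≤ Real.exp (13 / 2) := by gcongr; linarith [Real.pi_lt_d6]
    _ ≤ 666 := by
      refine le_of_sq_le_sq ?_ (by norm_num)
      calc Real.exp (13 / 2) ^ 2 = Real.exp 1 ^ 13 := by
            rw [← Real.exp_nat_mul, ← Real.exp_nat_mul]; norm_num
        _ ≤ 2.7182818286 ^ 13 := by gcongr; exact Real.exp_one_lt_d9.le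
        _ ≤ 666 ^ 2 := by norm_num

theorem le_norm_pi_mul_div_exp_sub_one {z : ℂ} (hz : ‖z‖ ≤ 1)
    (hne : Complex.exp (2 * Real.pi * z) - 1 ≠ 0) :
    0.0047 ≤ ‖Real.pi * z / (Complex.exp (2 * Real.pi * z) - 1)‖ := by
  have hexp := norm_exp_mul_sub_one_le Real.two_pi_pos.le hz
  push_cast at hexp
  rw [norm_div, norm_mul, Complex.norm_real, Real.norm_of_nonneg Real.pi_pos.le,
    le_div_iff₀ (norm_pos_iff.2 hne)]
  calc 0.0047 * ‖Complex.exp (2 * Real.pi * z) - 1‖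
      ≤ 0.0047 * (‖z‖ * (666 - 1)) := by
        gcongr; exact hexp.trans (by gcongr; exact exp_two_mul_pi_le)
    _ = 3.1255 * ‖z‖ := by ring
    _ ≤ Real.pi * ‖z‖ := by gcongr; linarith [Real.pi_gt_d6]

end ExpBound

section Halves

open Polynomial

/-- The polynomial `h_k` for which `(-1)^k (π/2) (1 + z²) P_k(z)` is the sum of `h_k` and
`(-1)^k` times its conjugate reciprocal in degree `2k + 2`. In terms of `ζ_j = evenZeta j`, half
of each product in
`ζ_j ζ_{k-j} = 1 + (ζ_j - 1)(ζ_{k-j} + 1) / 2 + (ζ_j + 1)(ζ_{k-j} - 1) / 2`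
goes into `h_k`, and the `1`s are summed by the factor `1 + z²`. -/
noncomputable def halfPoly (k : ℕ) : ℂ[X] :=
  1 + (1 + X ^ 2) * (∑ j ∈ Finset.range (k + 1),
    C ((-1 : ℂ) ^ j * ((evenZeta j - 1) * (evenZeta (k - j) + 1) / 2)) * X ^ (2 * j) +
      C (Real.pi / 2 * zetaVal (2 * k - 1) : ℂ) * X)

theorem eval_halfPoly (k : ℕ) (z : ℂ) :
    (halfPoly k).eval z = 1 + (1 + z ^ 2) * (∑ j ∈ Finset.range (k + 1),
      (-1 : ℂ) ^ j * ((evenZeta j - 1) * (evenZeta (k - j) + 1) / 2) * z ^ (2 * j) +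
        Real.pi / 2 * zetaVal (2 * k - 1) * z) := by
  simp [halfPoly, eval_finsetSum]

theorem natDegree_halfPoly_le {k : ℕ} (hk : k ≠ 0) : (halfPoly k).natDegree ≤ 2 * k + 2 := by
  have hsum : (∑ j ∈ Finset.range (k + 1),
      C ((-1 : ℂ) ^ j * ((evenZeta j - 1) * (evenZeta (k - j) + 1) / 2)) *
        X ^ (2 * j)).natDegree ≤ 2 * k :=
    natDegree_sum_le_of_forall_le _ _ fun j hj ↦
      (natDegree_C_mul_X_pow_le _ _).trans (by have := Finset.mem_range.1 hj; omega)
  have hquad : (1 + X ^ 2 : ℂ[X]).natDegree ≤ 2 := by compute_degree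
  refine natDegree_add_le_of_degree_le (by simp) ?_
  rw [add_comm (2 * k)]
  refine natDegree_mul_le_of_le hquad (natDegree_add_le_of_degree_le hsum ?_)
  exact (natDegree_C_mul_le _ _).trans (natDegree_X_le.trans (by omega))

theorem eval_halfPoly_conj (k : ℕ) (z : ℂ) :
    (halfPoly k).eval (conj z) = conj ((halfPoly k).eval z) := by
  simp [eval_halfPoly, map_ofNat (starRingEnd ℂ) 2]

/-- The amount by which `h_k(z) / (1 + z²)` differs from its limit `-πz / (exp(2πz) - 1)`
as `k → ∞`. -/
noncomputable def halfPolyError (k : ℕ) (z : ℂ) : ℂ :=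
  (∑ j ∈ Finset.range (k + 1),
      (-1 : ℂ) ^ j * ((evenZeta j - 1) * (evenZeta (k - j) - 1)) * z ^ (2 * j)) / 2 +
    Real.pi / 2 * (zetaVal (2 * k - 1) - 1) * z -
    ∑' j : ℕ, (-1 : ℂ) ^ (j + (k + 1)) * (evenZeta (j + (k + 1)) - 1) * z ^ (2 * (j + (k + 1)))

theorem eval_halfPoly_eq_mul (k : ℕ) {z : ℂ} (hz0 : z ≠ 0) (hz : ‖z‖ < 1) :
    (halfPoly k).eval z = (1 + z ^ 2) *
      (halfPolyError k z - Real.pi * z / (Complex.exp (2 * Real.pi * z) - 1)) := by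
  have htail := (summable_evenZeta_sub_one hz.le).sum_add_tsum_nat_add (k + 1)
  rw [tsum_evenZeta_sub_one hz0 hz] at htail
  have hsum : ∑ j ∈ Finset.range (k + 1),
      (-1 : ℂ) ^ j * ((evenZeta j - 1) * (evenZeta (k - j) + 1) / 2) * z ^ (2 * j) =
      (∑ j ∈ Finset.range (k + 1), (-1 : ℂ) ^ j * (evenZeta j - 1) * z ^ (2 * j)) +
      (∑ j ∈ Finset.range (k + 1),
        (-1 : ℂ) ^ j * ((evenZeta j - 1) * (evenZeta (k - j) - 1)) * z ^ (2 * j)) / 2 := by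
    rw [Finset.sum_div, ← Finset.sum_add_distrib]
    exact Finset.sum_congr rfl fun j _ ↦ by ring
  have hinv : (1 + z ^ 2) * (1 + z ^ 2)⁻¹ = 1 := by
    refine mul_inv_cancel₀ fun h0 ↦ hz.ne ?_
    rw [← pow_eq_one_iff_of_nonneg (norm_nonneg z) two_ne_zero, ← norm_pow,
      eq_neg_of_add_eq_zero_right h0, norm_neg, norm_one]
  rw [eval_halfPoly, hsum, halfPolyError]
  linear_combination (1 + z ^ 2) * htail - hinv

theorem norm_tsum_evenZeta_sub_one_mul_pow_le {z : ℂ} (hz : ‖z‖ ≤ 1) {N : ℕ} (hN : 2 ≤ N) :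
    ‖∑' j : ℕ, (-1 : ℂ) ^ (j + N) * (evenZeta (j + N) - 1) * z ^ (2 * (j + N))‖ ≤
      1.76 * (1 / 4) ^ N := by
  have hgeom : HasSum (fun j : ℕ ↦ 1.32 * (1 / 4 : ℝ) ^ (j + N)) (1.76 * (1 / 4) ^ N) := by
    have hsum := (hasSum_geometric_of_lt_one (r := (1 / 4 : ℝ)) (by norm_num)
      (by norm_num)).mul_left (1.32 * (1 / 4) ^ N)
    rw [show (1.76 : ℝ) * (1 / 4) ^ N = 1.32 * (1 / 4) ^ N * (1 - 1 / 4)⁻¹ by ring]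
    exact hsum.congr_fun fun j ↦ by ring
  exact tsum_of_norm_bounded hgeom fun j ↦ (norm_evenZeta_sub_one_mul_pow_le hz _).trans
    (abs_evenZeta_sub_one_le_of_two_le (by omega))

theorem norm_sum_evenZeta_sub_one_mul_evenZeta_sub_one_le {k : ℕ} (hk : 3 ≤ k) {z : ℂ}
    (hz : ‖z‖ ≤ 1) :
    ‖∑ j ∈ Finset.range (k + 1),
      (-1 : ℂ) ^ j * ((evenZeta j - 1) * (evenZeta (k - j) - 1)) * z ^ (2 * j)‖ ≤
      3.42 * (k + 1) * (1 / 4) ^ k := by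
  have hterm : ∀ j ∈ Finset.range (k + 1),
      ‖(-1 : ℂ) ^ j * ((evenZeta j - 1) * (evenZeta (k - j) - 1)) * z ^ (2 * j)‖ ≤
        3.42 * (1 / 4) ^ k := fun j hj ↦ by
    have hjk : j + (k - j) = k := Nat.add_sub_cancel' (Nat.lt_succ_iff.1 (Finset.mem_range.1 hj))
    calc ‖(-1 : ℂ) ^ j * ((evenZeta j - 1) * (evenZeta (k - j) - 1)) * z ^ (2 * j)‖
        = ‖(((evenZeta j - 1) * (evenZeta (k - j) - 1) : ℝ) : ℂ)‖ * ‖z‖ ^ (2 * j) := by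
          push_cast
          rw [norm_mul, norm_mul, norm_pow, norm_pow, norm_neg, norm_one, one_pow, one_mul]
      _ ≤ |(evenZeta j - 1) * (evenZeta (k - j) - 1)| := by
          rw [Complex.norm_real]
          exact mul_le_of_le_one_right (norm_nonneg _) (pow_le_one₀ (norm_nonneg z) hz)
      _ ≤ 3.42 * (1 / 4) ^ k := by
          simpa only [hjk] using abs_mul_evenZeta_sub_one_le (hjk.symm ▸ hk : 3 ≤ j + (k - j))
  refine (norm_sum_le_of_le _ hterm).trans_eq ?_
  rw [Finset.sum_const, Finset.card_range, nsmul_eq_mul]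
  push_cast
  ring

theorem norm_halfPolyError_le {k : ℕ} (hk : 3 ≤ k) {z : ℂ} (hz : ‖z‖ ≤ 1) :
    ‖halfPolyError k z‖ ≤ (1.71 * (k + 1) + 4.6) * (1 / 4) ^ k := by
  have hsum := norm_sum_evenZeta_sub_one_mul_evenZeta_sub_one_le hk hz
  have htail := norm_tsum_evenZeta_sub_one_mul_pow_le hz (by omega : 2 ≤ k + 1)
  have hlin : ‖(Real.pi / 2 * (zetaVal (2 * k - 1) - 1) * z : ℂ)‖ ≤ 4.15 * (1 / 4) ^ k := by
    have hzeta := zetaVal_sub_one_le (by omega : 4 ≤ 2 * k - 1)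
    have hpow : (1 / 2 : ℝ) ^ (2 * k - 1) = 2 * (1 / 4) ^ k := by
      rw [show (1 / 4 : ℝ) = (1 / 2) ^ 2 by norm_num, ← pow_mul,
        ← pow_sub_one_mul (by omega : 2 * k ≠ 0)]
      ring
    have hcast : (Real.pi / 2 * (zetaVal (2 * k - 1) - 1) * z : ℂ) =
        ((Real.pi / 2 * (zetaVal (2 * k - 1) - 1) : ℝ) : ℂ) * z := by push_cast; ring
    have hone := one_le_zetaVal (by omega : 2 ≤ 2 * k - 1)
    rw [hcast, norm_mul, Complex.norm_real, Real.norm_of_nonneg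
      (mul_nonneg (by positivity) (sub_nonneg.2 hone))]
    calc Real.pi / 2 * (zetaVal (2 * k - 1) - 1) * ‖z‖
        ≤ 3.141593 / 2 * (1.32 * (2 * (1 / 4) ^ k)) * 1 := by
          rw [← hpow]
          gcongr
          exact Real.pi_lt_d6.le
      _ ≤ 4.15 * (1 / 4) ^ k := by linarith [pow_pos (by norm_num : (0 : ℝ) < 1 / 4) k]
  rw [pow_succ] at htail
  refine (norm_sub_le _ _).trans ((add_le_add_left (norm_add_le _ _) _).trans ?_)
  rw [norm_div, Complex.norm_ofNat]
  linarith [pow_pos (by norm_num : (0 : ℝ) < 1 / 4) k]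

theorem linear_mul_one_div_four_pow_le {k : ℕ} (hk : 6 ≤ k) :
    (1.71 * (k + 1) + 4.6) * (1 / 4 : ℝ) ^ k ≤ 0.0041 := by
  induction k, hk using Nat.le_induction with
  | base => norm_num
  | succ n _ ih =>
    have hpow : (0 : ℝ) < (1 / 4) ^ n := by positivity
    rw [pow_succ]
    push_cast
    nlinarith [n.cast_nonneg (α := ℝ)]

theorem le_norm_eval_halfPoly {k : ℕ} (hk : 6 ≤ k) {z : ℂ} (hz : ‖z‖ ≤ 1) :
    0.0005 * ‖1 + z ^ 2‖ ≤ ‖(halfPoly k).eval z‖ := by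
  have hclosed : IsClosed {w : ℂ | 0.0005 * ‖1 + w ^ 2‖ ≤ ‖(halfPoly k).eval w‖} :=
    isClosed_le (by fun_prop) (halfPoly k).continuous.norm
  have hpunctured : Metric.ball (0 : ℂ) 1 ∩ {0}ᶜ ⊆
      {w : ℂ | 0.0005 * ‖1 + w ^ 2‖ ≤ ‖(halfPoly k).eval w‖} := by
    rintro w ⟨hw, hw0⟩
    rw [mem_ball_zero_iff] at hw
    have herror := (norm_halfPolyError_le (by omega) hw.le).trans
      (linear_mul_one_div_four_pow_le hk)
    have hlimit := le_norm_pi_mul_div_exp_sub_one hw.le (exp_two_pi_mul_sub_one_ne_zero hw0 hw)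
    rw [Set.mem_ofPred_eq, eval_halfPoly_eq_mul k hw0 hw, norm_mul, mul_comm]
    gcongr
    rw [norm_sub_rev]
    exact le_trans (by linarith) (norm_sub_norm_le _ _)
  have hball : Metric.ball (0 : ℂ) 1 ⊆ closure (Metric.ball (0 : ℂ) 1 ∩ {0}ᶜ) :=
    (dense_compl_singleton (0 : ℂ)).open_subset_closure_inter Metric.isOpen_ball
  have hclosure := closure_minimal (hball.trans (closure_minimal hpunctured hclosed)) hclosed
  rw [closure_ball (0 : ℂ) one_ne_zero] at hclosure
  exact hclosure (mem_closedBall_zero_iff.2 hz)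

theorem eval_halfPoly_ne_zero {k : ℕ} (hk : 6 ≤ k) {z : ℂ} (hz : ‖z‖ ≤ 1) :
    (halfPoly k).eval z ≠ 0 := fun h0 ↦ by
  have hle := le_norm_eval_halfPoly hk hz
  rw [h0, norm_zero] at hle
  have hquad : 1 + z ^ 2 = 0 := norm_le_zero_iff.1 (by linarith)
  simp [eval_halfPoly, hquad] at h0

end Halves

section Decomposition

open Polynomial

theorem eval_Ppoly (k : ℕ) (z : ℂ) :
    (Ppoly k).eval z = (2 * Real.pi) ^ (2 * k - 1) / (2 * k).factorial *
      ∑ j ∈ Finset.range (k + 1), (-1 : ℂ) ^ j * (_root_.bernoulli (2 * j) : ℂ) *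
        (_root_.bernoulli (2 * k - 2 * j) : ℂ) * ((2 * k).choose (2 * j) : ℂ) * z ^ (2 * j) +
      zetaVal (2 * k - 1) * (z ^ (2 * k - 1) + (-1) ^ k * z) := by
  simp [Ppoly, eval_finsetSum]

theorem two_pi_pow_mul_bernoulli_mul_bernoulli_mul_choose {j k : ℕ} (hjk : j ≤ k) :
    (2 * Real.pi) ^ (2 * k) / (2 * k).factorial * ((_root_.bernoulli (2 * j) : ℝ) *
      (_root_.bernoulli (2 * k - 2 * j) : ℝ) * ((2 * k).choose (2 * j) : ℝ)) =
      4 * (-1) ^ k * (evenZeta j * evenZeta (k - j)) := by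
  obtain ⟨i, rfl⟩ := Nat.exists_eq_add_of_le hjk
  have hj := bernoulli_two_mul_div_factorial_mul j
  have hi := bernoulli_two_mul_div_factorial_mul i
  rw [Nat.cast_choose ℝ (by omega), ← Nat.mul_sub, Nat.add_sub_cancel_left]
  calc _ = ((_root_.bernoulli (2 * j) : ℝ) / (2 * j).factorial * (2 * Real.pi) ^ (2 * j)) *
        ((_root_.bernoulli (2 * i) : ℝ) / (2 * i).factorial * (2 * Real.pi) ^ (2 * i)) := by
        have := Nat.factorial_ne_zero (2 * (j + i))
        field_simp
        ring
    _ = 4 * (-1) ^ (j + i) * (evenZeta j * evenZeta i) := by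
        rw [hj, hi]
        ring

theorem half_pi_mul_eval_Ppoly {k : ℕ} (hk : k ≠ 0) (z : ℂ) :
    (-1 : ℂ) ^ k * (Real.pi / 2) * (Ppoly k).eval z =
      ∑ j ∈ Finset.range (k + 1), (-1 : ℂ) ^ j * (evenZeta j * evenZeta (k - j)) * z ^ (2 * j) +
        Real.pi / 2 * zetaVal (2 * k - 1) * (z + (-1) ^ k * z ^ (2 * k - 1)) := by
  have hsign : (-1 : ℂ) ^ k * (-1) ^ k = 1 := by rw [← mul_pow]; norm_num
  rw [eval_Ppoly, mul_add]
  congr 1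
  · rw [Finset.mul_sum, Finset.mul_sum]
    refine Finset.sum_congr rfl fun j hj ↦ ?_
    have hterm := congrArg Complex.ofReal
      (two_pi_pow_mul_bernoulli_mul_bernoulli_mul_choose (Finset.mem_range_succ_iff.1 hj))
    rw [← pow_sub_one_mul (by omega : 2 * k ≠ 0)] at hterm
    push_cast at hterm
    linear_combination (1 / 4) * (-1 : ℂ) ^ k * (-1) ^ j * z ^ (2 * j) * hterm +
      (-1 : ℂ) ^ j * (evenZeta j * evenZeta (k - j)) * z ^ (2 * j) * hsign
  · linear_combination (Real.pi / 2 * zetaVal (2 * k - 1) * z : ℂ) * hsign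

theorem one_add_sq_mul_sum_range {R : Type*} [CommRing R] (k : ℕ) (z : R) :
    (1 + z ^ 2) * ∑ j ∈ Finset.range (k + 1), (-1) ^ j * z ^ (2 * j) =
      1 + (-1) ^ k * z ^ (2 * k + 2) := by
  have hgeom := mul_neg_geom_sum (-z ^ 2) (k + 1)
  simp only [neg_pow (z ^ 2), ← pow_mul] at hgeom
  rw [← sub_neg_eq_add 1 (z ^ 2), hgeom]
  ring

theorem pow_mul_sum_range_inv_pow {K : Type*} [Field K] (a : ℕ → ℕ → K) (k : ℕ) {z : K}
    (hz : z ≠ 0) :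
    (-1 : K) ^ k * z ^ (2 * k) *
      ∑ j ∈ Finset.range (k + 1), (-1 : K) ^ j * a j (k - j) * z⁻¹ ^ (2 * j) =
      ∑ j ∈ Finset.range (k + 1), (-1 : K) ^ j * a (k - j) j * z ^ (2 * j) := by
  rw [← Finset.sum_range_reflect, Finset.mul_sum]
  refine Finset.sum_congr rfl fun j hj ↦ ?_
  obtain ⟨i, rfl⟩ := Nat.exists_eq_add_of_le (Finset.mem_range_succ_iff.1 hj)
  have hsign : (-1 : K) ^ i * (-1) ^ i = 1 := by rw [← mul_pow]; norm_num
  have hinv : z ^ (2 * i) * z⁻¹ ^ (2 * i) = 1 := by rw [← mul_pow, mul_inv_cancel₀ hz, one_pow]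
  simp only [Nat.add_sub_cancel, Nat.add_sub_cancel_left]
  linear_combination (-1 : K) ^ j * a i j * z ^ (2 * j) *
    (hsign * (z ^ (2 * i) * z⁻¹ ^ (2 * i)) + hinv)

theorem one_add_sq_mul_half_pi_mul_eval_Ppoly {k : ℕ} (hk : k ≠ 0) {z : ℂ} (hz : z ≠ 0) :
    (1 + z ^ 2) * ((-1 : ℂ) ^ k * (Real.pi / 2) * (Ppoly k).eval z) =
      (halfPoly k).eval z + (-1) ^ k * (z ^ (2 * k + 2) * (halfPoly k).eval z⁻¹) := by
  have hreflect := pow_mul_sum_range_inv_pow (K := ℂ)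
    (fun i j ↦ (evenZeta i - 1) * (evenZeta j + 1) / 2) k hz
  have hsplit : ∑ j ∈ Finset.range (k + 1),
      (-1 : ℂ) ^ j * (evenZeta j * evenZeta (k - j)) * z ^ (2 * j) =
      ∑ j ∈ Finset.range (k + 1), (-1 : ℂ) ^ j * z ^ (2 * j) +
      ∑ j ∈ Finset.range (k + 1),
        (-1 : ℂ) ^ j * ((evenZeta j - 1) * (evenZeta (k - j) + 1) / 2) * z ^ (2 * j) +
      ∑ j ∈ Finset.range (k + 1),
        (-1 : ℂ) ^ j * ((evenZeta (k - j) - 1) * (evenZeta j + 1) / 2) * z ^ (2 * j) := by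
    rw [← Finset.sum_add_distrib, ← Finset.sum_add_distrib]
    exact Finset.sum_congr rfl fun j _ ↦ by ring
  have hquad : z ^ (2 * k + 2) * (1 + z⁻¹ ^ 2) = (1 + z ^ 2) * z ^ (2 * k) := by
    rw [pow_add]; field_simp; ring
  have hlin : z ^ (2 * k) * z⁻¹ = z ^ (2 * k - 1) := by
    rw [← pow_sub_one_mul (by omega : 2 * k ≠ 0), mul_inv_cancel_right₀ hz]
  rw [half_pi_mul_eval_Ppoly hk, eval_halfPoly, eval_halfPoly, hsplit, ← hreflect]
  set S := ∑ j ∈ Finset.range (k + 1),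
    (-1 : ℂ) ^ j * ((evenZeta j - 1) * (evenZeta (k - j) + 1) / 2) * z⁻¹ ^ (2 * j)
  linear_combination one_add_sq_mul_sum_range k z -
    (-1) ^ k * (S + Real.pi / 2 * zetaVal (2 * k - 1) * z⁻¹) * hquad -
    (1 + z ^ 2) * (-1) ^ k * (Real.pi / 2 * zetaVal (2 * k - 1)) * hlin

theorem one_add_sq_mul_Ppoly {k : ℕ} (hk : k ≠ 0) :
    (1 + X ^ 2) * C ((-1 : ℂ) ^ k * (Real.pi / 2)) * Ppoly k =
      halfPoly k + C ((-1 : ℂ) ^ k) * conjReflect (2 * k + 2) (halfPoly k) := by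
  refine eq_of_infinite_eval_eq _ _ ((Set.finite_singleton (0 : ℂ)).infinite_compl.mono
    fun z hz ↦ ?_)
  have heval := one_add_sq_mul_half_pi_mul_eval_Ppoly hk hz
  rw [Set.mem_ofPred_eq, eval_add, eval_C_mul,
    eval_conjReflect_of_ne_zero (natDegree_halfPoly_le hk) hz, ← map_inv₀, eval_halfPoly_conj,
    Complex.conj_conj, ← heval, mul_assoc, eval_mul, eval_C_mul]
  simp

theorem Ppoly_ne_zero {k : ℕ} (hk : 2 ≤ k) : Ppoly k ≠ 0 := fun h0 ↦ by
  have hval := half_pi_mul_eval_Ppoly (by omega : k ≠ 0) 0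
  have hzeta : evenZeta k ≠ 0 := by
    rw [evenZeta_eq_zetaVal (by omega)]
    exact (zero_lt_one.trans_le (one_le_zetaVal (by omega))).ne'
  have hodd : 2 * k - 1 ≠ 0 := by omega
  rw [Finset.sum_range_succ'] at hval
  simp [h0, hodd, hzeta, evenZeta_zero] at hval

theorem Ppoly_roots_on_unit_circle_and_simple_of_six_le {k : ℕ} (hk : 6 ≤ k) {z : ℂ}
    (hz : (Ppoly k).IsRoot z) : ‖z‖ = 1 ∧ (Ppoly k).rootMultiplicity z = 1 := by
  have hk0 : k ≠ 0 := by omega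
  have hne : (1 + X ^ 2) * C ((-1 : ℂ) ^ k * (Real.pi / 2)) ≠ 0 := by
    refine mul_ne_zero (fun h ↦ ?_) (C_ne_zero.2 (by simp [Real.pi_ne_zero]))
    simpa using congrArg (eval 0) h
  have hdvd : Ppoly k ∣ halfPoly k + C ((-1 : ℂ) ^ k) * conjReflect (2 * k + 2) (halfPoly k) :=
    one_add_sq_mul_Ppoly hk0 ▸ dvd_mul_left _ _
  obtain ⟨hnorm, hmult⟩ := norm_eq_one_and_rootMultiplicity_eq_one_of_isRoot_add_conjReflect
    (by omega) (natDegree_halfPoly_le hk0) (fun w hw ↦ eval_halfPoly_ne_zero hk hw)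
    (by simp : ‖(-1 : ℂ) ^ k‖ = 1) (hz.dvd hdvd)
  have hP : Ppoly k ≠ 0 := Ppoly_ne_zero (by omega)
  refine ⟨hnorm, le_antisymm (hmult ▸ rootMultiplicity_le_rootMultiplicity_of_dvd ?_ hdvd z)
    ((rootMultiplicity_pos hP).2 hz)⟩
  rw [← one_add_sq_mul_Ppoly hk0]
  exact mul_ne_zero hne hP

end Decomposition

section SignChanges

theorem exists_finset_card_eq_of_alternating {n : ℕ} {a : Fin (n + 1) → ℝ} (ha : StrictMono a)
    {q : ℝ → ℝ} (hq : Continuous q) (halt : ∀ i : Fin (n + 1), 0 < (-1) ^ (i : ℕ) * q (a i)) :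
    ∃ T : Finset ℝ, T.card = n ∧ ∀ t ∈ T, t ∈ Set.Ioo (a 0) (a (Fin.last n)) ∧ q t = 0 := by
  have hzero (i : Fin n) : ∃ t ∈ Set.Ioo (a i.castSucc) (a i.succ), q t = 0 := by
    have hleft := halt i.castSucc
    have hright := halt i.succ
    have hlt := ha i.castSucc_lt_succ
    rw [Fin.val_succ, pow_succ] at hright
    rw [Fin.val_castSucc] at hleft
    obtain hi | hi := neg_one_pow_eq_or ℝ (i : ℕ) <;> rw [hi] at hleft hright
    · exact intermediate_value_Ioo' hlt.le hq.continuousOn ⟨by linarith, by linarith⟩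
    · exact intermediate_value_Ioo hlt.le hq.continuousOn ⟨by linarith, by linarith⟩
  choose t ht hqt using hzero
  have htmono : StrictMono t := fun i j hij ↦
    (ht i).2.trans_le ((ha.monotone (Fin.le_castSucc_iff.2 (by simpa using hij))).trans (ht j).1.le)
  refine ⟨Finset.univ.image t, by simp [Finset.card_image_of_injective _ htmono.injective], ?_⟩
  simp only [Finset.mem_image, Finset.mem_univ, true_and, forall_exists_index,
    forall_apply_eq_imp_iff]
  exact fun i ↦ ⟨⟨(ha.monotone (Fin.zero_le _)).trans_lt (ht i).1,
    (ht i).2.trans_le (ha.monotone (Fin.le_last _))⟩, hqt i⟩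

end SignChanges

section CircleLift

/-- The solution `w` of `w + w⁻¹ = t` on the upper half of the unit circle, for `|t| ≤ 2`. -/
noncomputable def circleLift (t : ℝ) : ℂ := ⟨t / 2, √(1 - (t / 2) ^ 2)⟩

theorem circleLift_injective : Function.Injective circleLift := fun s t h ↦ by
  have hre := congrArg Complex.re h
  simpa [circleLift] using hre

theorem norm_circleLift {t : ℝ} (ht : |t| ≤ 2) : ‖circleLift t‖ = 1 := by
  have hnonneg : 0 ≤ 1 - (t / 2) ^ 2 := by nlinarith [abs_le.1 ht]
  rw [Complex.norm_eq_sqrt_sq_add_sq, circleLift, Real.sq_sqrt hnonneg]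
  simp

theorem circleLift_add_inv {t : ℝ} (ht : |t| ≤ 2) : circleLift t + (circleLift t)⁻¹ = t := by
  rw [Complex.inv_eq_conj (norm_circleLift ht), Complex.add_conj]
  simp [circleLift, mul_div_cancel₀]

theorem circleLift_im_pos {t : ℝ} (ht : |t| < 2) : 0 < (circleLift t).im :=
  Real.sqrt_pos.2 (by nlinarith [abs_lt.1 ht])

theorem exists_finset_norm_eq_one_add_inv_mem {T : Finset ℝ} (hT : ∀ t ∈ T, |t| < 2) :
    ∃ W : Finset ℂ, W.card = 2 * T.card ∧
      ∀ w ∈ W, ‖w‖ = 1 ∧ w.im ≠ 0 ∧ ∃ t ∈ T, w + w⁻¹ = t := by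
  have hupper : ∀ w ∈ T.image circleLift, ‖w‖ = 1 ∧ 0 < w.im ∧ ∃ t ∈ T, w + w⁻¹ = t := by
    simp only [Finset.mem_image, forall_exists_index, and_imp, forall_apply_eq_imp_iff₂]
    exact fun t ht ↦ ⟨norm_circleLift (hT t ht).le, circleLift_im_pos (hT t ht), t, ht,
      circleLift_add_inv (hT t ht).le⟩
  have hlower : ∀ w ∈ (T.image circleLift).image conj,
      ‖w‖ = 1 ∧ w.im < 0 ∧ ∃ t ∈ T, w + w⁻¹ = t := by
    simp only [Finset.mem_image (f := conj), forall_exists_index, and_imp,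
      forall_apply_eq_imp_iff₂]
    intro w hw
    obtain ⟨hnorm, him, t, ht, hwt⟩ := hupper w hw
    refine ⟨by simpa using hnorm, by simpa using him, t, ht, ?_⟩
    rw [← map_inv₀, ← map_add, hwt, Complex.conj_ofReal]
  refine ⟨T.image circleLift ∪ (T.image circleLift).image conj, ?_, fun w hw ↦ ?_⟩
  · rw [Finset.card_union_of_disjoint, Finset.card_image_of_injective _ (starRingEnd ℂ).injective,
      Finset.card_image_of_injective _ circleLift_injective, two_mul]
    exact Finset.disjoint_left.2 fun w hw hw' ↦ (hupper w hw).2.1.not_gt (hlower w hw').2.1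
  · obtain hw | hw := Finset.mem_union.1 hw
    · exact (hupper w hw).imp_right (And.imp_left ne_of_gt)
    · exact (hlower w hw).imp_right (And.imp_left ne_of_lt)

end CircleLift

section RootCounting

open Polynomial

theorem rootMultiplicity_eq_one_of_natDegree_le_card {R : Type*} [CommRing R] [IsDomain R]
    {P : R[X]} (hP : P ≠ 0) {S : Finset R} (hS : ∀ x ∈ S, P.eval x = 0)
    (hdeg : P.natDegree ≤ S.card) {z : R} (hz : P.IsRoot z) :
    z ∈ S ∧ P.rootMultiplicity z = 1 := by
  classical
  have hroots := roots_eq_of_natDegree_le_card_of_ne_zero hS hdeg hP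
  have hzS : z ∈ S := by simpa [hroots] using (mem_roots hP).2 hz
  rw [← count_roots, hroots]
  exact ⟨hzS, Multiset.count_eq_one_of_mem S.nodup hzS⟩

/-- A zero `t ∈ (-2, 2)` of `q` yields the two roots `w` of `P` with `w + w⁻¹ = t`, and the
remaining roots are at `±1`. -/
theorem norm_eq_one_and_rootMultiplicity_eq_one_of_alternating {P : ℂ[X]} (hP : P ≠ 0)
    {S : Finset ℂ} (hS : S ⊆ {1, -1}) (hPS : ∀ x ∈ S, P.eval x = 0) {n : ℕ}
    (hdeg : P.natDegree ≤ 2 * n + S.card) {q : ℝ → ℝ} (hq : Continuous q)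
    (hPq : ∀ w : ℂ, w ≠ 0 → ∀ t : ℝ, w + w⁻¹ = t → q t = 0 → P.eval w = 0)
    {a : Fin (n + 1) → ℝ} (ha : StrictMono a) (hleft : -2 ≤ a 0) (hright : a (Fin.last n) ≤ 2)
    (halt : ∀ i : Fin (n + 1), 0 < (-1) ^ (i : ℕ) * q (a i)) {z : ℂ} (hz : P.IsRoot z) :
    ‖z‖ = 1 ∧ P.rootMultiplicity z = 1 := by
  obtain ⟨T, hTcard, hT⟩ := exists_finset_card_eq_of_alternating ha hq halt
  obtain ⟨W, hWcard, hW⟩ := exists_finset_norm_eq_one_add_inv_mem fun t ht ↦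
    abs_lt.2 ⟨hleft.trans_lt (hT t ht).1.1, (hT t ht).1.2.trans_le hright⟩
  have hdisj : Disjoint W S := Finset.disjoint_left.2 fun w hwW hwS ↦ (hW w hwW).2.1 <| by
    obtain rfl | rfl : w = 1 ∨ w = -1 := by simpa using hS hwS
    all_goals simp
  have hroot : ∀ w ∈ W ∪ S, ‖w‖ = 1 ∧ P.eval w = 0 := fun w hw ↦ by
    obtain hw | hw := Finset.mem_union.1 hw
    · obtain ⟨hnorm, -, t, ht, hwt⟩ := hW w hw
      exact ⟨hnorm, hPq w (norm_ne_zero_iff.1 (hnorm ▸ one_ne_zero)) t hwt (hT t ht).2⟩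
    · refine ⟨?_, hPS w hw⟩
      obtain rfl | rfl : w = 1 ∨ w = -1 := by simpa using hS hw
      all_goals simp
  obtain ⟨hzS, hmult⟩ := rootMultiplicity_eq_one_of_natDegree_le_card hP
    (fun w hw ↦ (hroot w hw).2)
    (by rwa [Finset.card_union_of_disjoint hdisj, hWcard, hTcard]) hz
  exact ⟨(hroot z hzS).1, hmult⟩

end RootCounting

section SmallCases

open Polynomial

theorem bernoulli_four : _root_.bernoulli 4 = -1 / 30 := by
  rw [bernoulli_eq_bernoulli'_of_ne_one (by norm_num), bernoulli'_four]

theorem bernoulli_six : _root_.bernoulli 6 = 1 / 42 := by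
  rw [bernoulli_eq_bernoulli'_of_ne_one (by norm_num), bernoulli'_def]
  norm_num [Finset.sum_range_succ, bernoulli'_eq_zero_of_odd (n := 5) (by decide), Nat.choose]

theorem bernoulli_eight : _root_.bernoulli 8 = -1 / 30 := by
  have hsix := bernoulli_six
  rw [bernoulli_eq_bernoulli'_of_ne_one (by norm_num)] at hsix ⊢
  rw [bernoulli'_def]
  norm_num [Finset.sum_range_succ, hsix, bernoulli'_eq_zero_of_odd (n := 5) (by decide),
    bernoulli'_eq_zero_of_odd (n := 7) (by decide), Nat.choose]

theorem bernoulli_ten : _root_.bernoulli 10 = 5 / 66 := by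
  have hsix := bernoulli_six
  have height := bernoulli_eight
  rw [bernoulli_eq_bernoulli'_of_ne_one (by norm_num)] at hsix height ⊢
  rw [bernoulli'_def]
  norm_num [Finset.sum_range_succ, hsix, height, bernoulli'_eq_zero_of_odd (n := 5) (by decide),
    bernoulli'_eq_zero_of_odd (n := 7) (by decide),
    bernoulli'_eq_zero_of_odd (n := 9) (by decide), Nat.choose]

theorem natDegree_Ppoly_le {k : ℕ} (hk : k ≠ 0) : (Ppoly k).natDegree ≤ 2 * k := by
  refine natDegree_add_le_of_degree_le ((natDegree_C_mul_le _ _).trans ?_)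
    ((natDegree_C_mul_le _ _).trans (natDegree_add_le_of_degree_le ?_ ?_))
  · exact natDegree_sum_le_of_forall_le _ _ fun j hj ↦
      (natDegree_C_mul_X_pow_le _ _).trans (by have := Finset.mem_range.1 hj; omega)
  · rw [natDegree_X_pow]; omega
  · exact (natDegree_C_mul_le _ _).trans (natDegree_X_le.trans (by omega))

theorem eval_Ppoly_two {w : ℂ} (hw : w ≠ 0) : (Ppoly 2).eval w =
    -w ^ 2 * (Real.pi ^ 3 / 90 * ((w + w⁻¹) ^ 2 + 3) - zetaVal 3 * (w + w⁻¹)) := by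
  rw [eval_Ppoly]
  simp [Finset.sum_range_succ, bernoulli_four, Nat.choose, Nat.factorial]
  field_simp
  ring

theorem eval_Ppoly_three {w : ℂ} (hw : w ≠ 0) : (Ppoly 3).eval w =
    w ^ 2 * (1 - w ^ 2) *
      (Real.pi ^ 5 / 1890 * (2 * (w + w⁻¹) ^ 2 + 5) - zetaVal 5 * (w + w⁻¹)) := by
  rw [eval_Ppoly]
  simp [Finset.sum_range_succ, bernoulli_four, bernoulli_six, Nat.choose, Nat.factorial]
  field_simp
  ring

theorem eval_Ppoly_four {w : ℂ} (hw : w ≠ 0) : (Ppoly 4).eval w =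
    -w ^ 4 * (Real.pi ^ 7 / 28350 * (3 * (w + w⁻¹) ^ 4 - 2 * (w + w⁻¹) ^ 2 - 21) -
      zetaVal 7 * ((w + w⁻¹) ^ 3 - 3 * (w + w⁻¹))) := by
  rw [eval_Ppoly]
  simp [Finset.sum_range_succ, bernoulli_four, bernoulli_six, bernoulli_eight, Nat.choose,
    Nat.factorial]
  field_simp
  ring

theorem eval_Ppoly_five {w : ℂ} (hw : w ≠ 0) : (Ppoly 5).eval w =
    w ^ 4 * (1 - w ^ 2) *
      (Real.pi ^ 9 / 935550 * (10 * (w + w⁻¹) ^ 4 + 3 * (w + w⁻¹) ^ 2 - 45) -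
        zetaVal 9 * ((w + w⁻¹) ^ 3 - 2 * (w + w⁻¹))) := by
  rw [eval_Ppoly]
  simp [Finset.sum_range_succ, bernoulli_four, bernoulli_six, bernoulli_eight, bernoulli_ten,
    Nat.choose, Nat.factorial]
  field_simp
  ring

theorem pi_pow_mem_Ioo {n : ℕ} (hn : n ≠ 0) :
    Real.pi ^ n ∈ Set.Ioo ((3.141592 : ℝ) ^ n) (3.141593 ^ n) :=
  ⟨pow_lt_pow_left₀ Real.pi_gt_d6 (by norm_num) hn,
    pow_lt_pow_left₀ Real.pi_lt_d6 Real.pi_pos.le hn⟩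

theorem zetaVal_three_mem_Ioo : zetaVal 3 ∈ Set.Ioo 1.195 1.2055 := by
  have hlower := sum_range_le_zetaVal (m := 3) (by norm_num) 15
  have hupper := zetaVal_le_sum_range_add le_rfl (by norm_num : 2 ≤ 3) 15
  norm_num [Finset.sum_range_succ, zetaVal_two] at hlower hupper
  constructor <;> linarith [pi_sq_lt]

theorem Ppoly_two_roots_on_unit_circle_and_simple {z : ℂ} (hz : (Ppoly 2).IsRoot z) :
    ‖z‖ = 1 ∧ (Ppoly 2).rootMultiplicity z = 1 := by
  obtain ⟨hpi, hpi'⟩ := pi_pow_mem_Ioo (n := 3) (by norm_num)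
  obtain ⟨hzeta, hzeta'⟩ := zetaVal_three_mem_Ioo
  norm_num at hpi hpi' hzeta hzeta'
  refine norm_eq_one_and_rootMultiplicity_eq_one_of_alternating (S := ∅)
    (Ppoly_ne_zero le_rfl) (by simp) (by simp) (n := 2) (natDegree_Ppoly_le (by norm_num))
    (q := fun t ↦ Real.pi ^ 3 / 90 * (t ^ 2 + 3) - zetaVal 3 * t) (by fun_prop)
    (fun w hw t ht hq ↦ ?_) (a := ![-2, 7 / 4, 2]) ?_ (by simp) (by simp) ?_ hz
  · rw [eval_Ppoly_two hw, ht]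
    exact_mod_cast mul_eq_zero_of_right _ (congrArg Complex.ofReal hq)
  · norm_num [strictMono_vecCons]
    exact Subsingleton.strictMono (α := Fin 1) _
  · intro i
    fin_cases i <;> norm_num <;> linarith

theorem Ppoly_three_roots_on_unit_circle_and_simple {z : ℂ} (hz : (Ppoly 3).IsRoot z) :
    ‖z‖ = 1 ∧ (Ppoly 3).rootMultiplicity z = 1 := by
  obtain ⟨hpi, hpi'⟩ := pi_pow_mem_Ioo (n := 5) (by norm_num)
  have hzeta := sum_range_le_zetaVal (m := 5) (by norm_num) 2
  have hzeta' := zetaVal_sub_one_le (m := 5) (by norm_num)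
  norm_num [Finset.sum_range_succ] at hpi hpi' hzeta hzeta'
  refine norm_eq_one_and_rootMultiplicity_eq_one_of_alternating (S := {1, -1})
    (Ppoly_ne_zero (by norm_num)) subset_rfl ?_ (n := 2) ?_
    (q := fun t ↦ Real.pi ^ 5 / 1890 * (2 * t ^ 2 + 5) - zetaVal 5 * t) (by fun_prop)
    (fun w hw t ht hq ↦ ?_) (a := ![-2, 8 / 5, 2]) ?_ (by simp) (by simp) ?_ hz
  · simp [eval_Ppoly_three]
  · simpa [CharZero.eq_neg_self_iff] using natDegree_Ppoly_le (k := 3) (by norm_num)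
  · rw [eval_Ppoly_three hw, ht]
    exact_mod_cast mul_eq_zero_of_right _ (congrArg Complex.ofReal hq)
  · norm_num [strictMono_vecCons]
    exact Subsingleton.strictMono (α := Fin 1) _
  · intro i
    fin_cases i <;> norm_num <;> linarith

theorem Ppoly_four_roots_on_unit_circle_and_simple {z : ℂ} (hz : (Ppoly 4).IsRoot z) :
    ‖z‖ = 1 ∧ (Ppoly 4).rootMultiplicity z = 1 := by
  obtain ⟨hpi, hpi'⟩ := pi_pow_mem_Ioo (n := 7) (by norm_num)
  have hzeta := one_le_zetaVal (m := 7) (by norm_num)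
  have hzeta' := zetaVal_sub_one_le (m := 7) (by norm_num)
  norm_num at hpi hpi' hzeta'
  refine norm_eq_one_and_rootMultiplicity_eq_one_of_alternating (S := ∅)
    (Ppoly_ne_zero (by norm_num)) (by simp) (by simp) (n := 4) (natDegree_Ppoly_le (by norm_num))
    (q := fun t ↦ Real.pi ^ 7 / 28350 * (3 * t ^ 4 - 2 * t ^ 2 - 21) -
      zetaVal 7 * (t ^ 3 - 3 * t)) (by fun_prop)
    (fun w hw t ht hq ↦ ?_) (a := ![-2, -1, 7 / 5, 93 / 50, 2]) ?_ (by simp) (by simp) ?_ hz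
  · rw [eval_Ppoly_four hw, ht]
    exact_mod_cast mul_eq_zero_of_right _ (congrArg Complex.ofReal hq)
  · norm_num [strictMono_vecCons]
    exact Subsingleton.strictMono (α := Fin 1) _
  · intro i
    fin_cases i <;> norm_num <;> linarith

theorem Ppoly_five_roots_on_unit_circle_and_simple {z : ℂ} (hz : (Ppoly 5).IsRoot z) :
    ‖z‖ = 1 ∧ (Ppoly 5).rootMultiplicity z = 1 := by
  obtain ⟨hpi, hpi'⟩ := pi_pow_mem_Ioo (n := 9) (by norm_num)
  have hzeta := one_le_zetaVal (m := 9) (by norm_num)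
  have hzeta' := zetaVal_sub_one_le (m := 9) (by norm_num)
  norm_num at hpi hpi' hzeta'
  refine norm_eq_one_and_rootMultiplicity_eq_one_of_alternating (S := {1, -1})
    (Ppoly_ne_zero (by norm_num)) subset_rfl ?_ (n := 4) ?_
    (q := fun t ↦ Real.pi ^ 9 / 935550 * (10 * t ^ 4 + 3 * t ^ 2 - 45) -
      zetaVal 9 * (t ^ 3 - 2 * t)) (by fun_prop)
    (fun w hw t ht hq ↦ ?_) (a := ![-2, -1, 32 / 25, 71 / 40, 2]) ?_ (by simp) (by simp) ?_ hz
  · simp [eval_Ppoly_five]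
  · simpa [CharZero.eq_neg_self_iff] using natDegree_Ppoly_le (k := 5) (by norm_num)
  · rw [eval_Ppoly_five hw, ht]
    exact_mod_cast mul_eq_zero_of_right _ (congrArg Complex.ofReal hq)
  · norm_num [strictMono_vecCons]
    exact Subsingleton.strictMono (α := Fin 1) _
  · intro i
    fin_cases i <;> norm_num <;> linarith

end SmallCases

theorem Ppoly_roots_on_unit_circle_and_simple_general (k : ℕ) (hk : 2 ≤ k) :
    ∀ z : ℂ, (Ppoly k).IsRoot z →
      ‖z‖ = 1 ∧ Polynomial.rootMultiplicity z (Ppoly k) = 1 := by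
  intro z hz
  obtain hk6 | hk6 := lt_or_ge k 6
  · interval_cases k
    · exact Ppoly_two_roots_on_unit_circle_and_simple hz
    · exact Ppoly_three_roots_on_unit_circle_and_simple hz
    · exact Ppoly_four_roots_on_unit_circle_and_simple hz
    · exact Ppoly_five_roots_on_unit_circle_and_simple hz
  · exact Ppoly_roots_on_unit_circle_and_simple_of_six_le hk6 hz

/-- For `2 ≤ k < 1000`, every complex root of `P_k` lies on the unit circle,
and all roots of `P_k` are simple. -/
theorem Ppoly_roots_on_unit_circle_and_simple (k : ℕ) (hk : 2 ≤ k) (hk' : k < 1000) :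
    ∀ z : ℂ, (Ppoly k).IsRoot z →
      ‖z‖ = 1 ∧ Polynomial.rootMultiplicity z (Ppoly k) = 1 :=
  Ppoly_roots_on_unit_circle_and_simple_general k hk
end

section
/- Let k > 10 be an integer and define w_k : ℝ → ℝ by w_k(θ) = 2 cos(kθ) + (π²/3) cos((k−2)θ) + (2/(1−2^{1−2k})) ∑_{m=0}^{k−4} cos((k−4−2m)θ), where the sum ∑_{m=0}^{k−4} cos((k−4−2m)θ) is the continuous extension of sin((k−3)θ)/sin θ. Then w_k is an alternating function of order 2k on (−π, π) with oscillation distance 0.3; that is, there exist points −π < p_1 < p_2 < … < p_{2k+1} < π such that |w_k(p_i)| > 0.3 for each i and w_k(p_i)·w_k(p_{i+1}) < 0 for each i ∈ {1,…,2k}. -/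
/-- The trigonometric polynomial
`w_k(θ) = 2 cos(kθ) + (π²/3) cos((k−2)θ) + (2/(1−2^{1−2k})) ∑_{m=0}^{k−4} cos((k−4−2m)θ)`,
where the last sum is the continuous extension of `sin((k−3)θ)/sin θ`. -/
noncomputable def wfun (k : ℕ) (θ : ℝ) : ℝ :=
  2 * Real.cos (k * θ) + Real.pi ^ 2 / 3 * Real.cos (((k : ℝ) - 2) * θ)
  + 2 / (1 - (2 : ℝ) ^ (1 - 2 * (k : ℤ))) *
      ∑ m ∈ Finset.range (k - 3), Real.cos (((k : ℝ) - 4 - 2 * m) * θ)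

/-!
Replacing the coefficient `2 / (1 - 2 ^ (1 - 2k))` by `2` changes `w_k` by at most `0.1`, and turns
it into `Re (e ^ (ikθ) A(θ)) = |A(θ)| cos (kθ + arg A(θ))` with an amplitude `A` that does not
depend on `k`. Off the zeros of `sin`, `A` takes values in the slit plane and `|A| > 0.4`, so
`φ(θ) = kθ + arg A(θ)` is continuous on `(0, π)`, and `w_k` has absolute value above `0.3` and sign
`(-1) ^ j` where `φ = jπ`. Since `φ(π/k) < π` and `φ(π - π/(2k)) > kπ`, this happens in `(0, π)`
for each `j = 1, …, k`, at points that can be chosen increasing in `j`; the reflected points and `0`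
complete the alternation because `w_k` is even.
-/

open Set
open Complex (exp I)
open Real (sin cos)
open scoped Real

/-- `f` is an `n`-th order alternating function on `(a, b)` with oscillation distance `d`.
Unlike in the paper, continuity of `f` is not part of the definition. -/
def IsAlternating (f : ℝ → ℝ) (a b : ℝ) (n : ℕ) (d : ℝ) : Prop :=
  ∃ p : Fin (n + 1) → ℝ, StrictMono p ∧ (∀ i, p i ∈ Ioo a b) ∧ (∀ i, d < |f (p i)|) ∧
    ∀ i : Fin n, f (p i.castSucc) * f (p i.succ) < 0

namespace IsAlternating

variable {f : ℝ → ℝ} {d : ℝ}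

lemma of_lt_neg_one_pow_mul {a b : ℝ} {n m : ℕ} {p : ℕ → ℝ} (hd : 0 ≤ d)
    (hp : ∀ i < n, p i < p (i + 1)) (hmem : ∀ i ≤ n, p i ∈ Ioo a b)
    (hsign : ∀ i ≤ n, d < (-1) ^ (i + m) * f (p i)) : IsAlternating f a b n d := by
  refine ⟨fun i ↦ p i, Fin.strictMono_iff_lt_succ.2 fun i ↦ hp i i.is_lt,
    fun i ↦ hmem i i.is_le, fun i ↦ ?_, fun i ↦ ?_⟩
  · simpa [abs_mul] using (hsign i i.is_le).trans_le (le_abs_self _)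
  · have hi := hd.trans_lt (hsign i i.is_lt.le)
    have hi' := hd.trans_lt (hsign (i + 1) i.is_lt)
    have hprod := mul_pos hi hi'
    rw [mul_mul_mul_comm, ← pow_add, Odd.neg_one_pow ⟨i + m, by ring⟩] at hprod
    simpa using hprod

lemma of_even {L : ℝ} {k : ℕ} {q : ℕ → ℝ} (hf : f.Even) (hd : 0 ≤ d) (hL : 0 < L)
    (hzero : d < f 0) (hq : StrictMonoOn q (Icc 1 k)) (hmem : ∀ j ∈ Icc 1 k, q j ∈ Ioo 0 L)
    (hsign : ∀ j ∈ Icc 1 k, d < (-1) ^ j * f (q j)) : IsAlternating f (-L) L (2 * k) d := by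
  let p (i : ℕ) : ℝ := if i < k then -q (k - i) else if i = k then 0 else q (i - k)
  have hleft {i : ℕ} (hi : i < k) : p i = -q (k - i) := if_pos hi
  have hmid : p k = 0 := by simp [p]
  have hright {i : ℕ} (hi : k < i) : p i = q (i - k) := by simp [p, hi.not_gt, hi.ne']
  refine of_lt_neg_one_pow_mul (p := p) (m := k) hd (fun i hi ↦ ?_) (fun i hi ↦ ?_)
    (fun i hi ↦ ?_)
  · rcases lt_trichotomy i k with hik | rfl | hik
    · rw [hleft hik]
      rcases (Nat.succ_le_of_lt hik).lt_or_eq with hik' | rfl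
      · rw [hleft hik', neg_lt_neg_iff]
        exact hq ⟨by omega, by omega⟩ ⟨by omega, by omega⟩ (by omega)
      · rw [hmid, neg_lt_zero]
        exact (hmem _ ⟨by omega, by omega⟩).1
    · rw [hmid, hright i.lt_succ_self]
      exact (hmem _ ⟨by omega, by omega⟩).1
    · rw [hright hik, hright (hik.trans i.lt_succ_self)]
      exact hq ⟨by omega, by omega⟩ ⟨by omega, by omega⟩ (by omega)
  · rcases lt_trichotomy i k with hik | rfl | hik
    · have h := hmem (k - i) ⟨by omega, by omega⟩
      rw [hleft hik]
      exact ⟨neg_lt_neg h.2, by linarith [h.1]⟩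
    · rw [hmid]
      exact ⟨neg_lt_zero.2 hL, hL⟩
    · have h := hmem (i - k) ⟨by omega, by omega⟩
      rw [hright hik]
      exact ⟨by linarith [h.1], h.2⟩
  · rcases lt_trichotomy i k with hik | rfl | hik
    · rw [hleft hik, hf, neg_one_pow_congr (n := k - i) (by grind)]
      exact hsign _ ⟨by omega, by omega⟩
    · rw [hmid, Even.neg_one_pow ⟨i, rfl⟩, one_mul]
      exact hzero
    · rw [hright hik, neg_one_pow_congr (n := i - k) (by grind)]
      exact hsign _ ⟨by omega, by omega⟩

end IsAlternating

/-- The least preimage is a strictly increasing choice, although `f` need not be monotone. -/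
lemma exists_strictMonoOn_rightInvOn_Icc {α δ : Type*}
    [ConditionallyCompleteLinearOrder α] [TopologicalSpace α] [OrderTopology α] [DenselyOrdered α]
    [LinearOrder δ] [TopologicalSpace δ] [OrderClosedTopology δ] {f : α → δ} {a b : α}
    (hab : a ≤ b) (hf : ContinuousOn f (Icc a b)) :
    ∃ g : δ → α, StrictMonoOn g (Icc (f a) (f b)) ∧ MapsTo g (Icc (f a) (f b)) (Icc a b) ∧
      RightInvOn g f (Icc (f a) (f b)) := by
  let g (y : δ) : α := sInf (Icc a b ∩ f ⁻¹' {y})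
  have hbdd (y : δ) : BddBelow (Icc a b ∩ f ⁻¹' {y}) := ⟨a, fun _ ht ↦ ht.1.1⟩
  have hg : ∀ y ∈ Icc (f a) (f b), g y ∈ Icc a b ∩ f ⁻¹' {y} := fun y hy ↦
    (hf.preimage_isClosed_of_isClosed isClosed_Icc isClosed_singleton).csInf_mem
      (intermediate_value_Icc hab hf hy) (hbdd y)
  refine ⟨g, fun y hy z hz hyz ↦ ?_, fun y hy ↦ (hg y hy).1, fun y hy ↦ (hg y hy).2⟩
  obtain ⟨⟨hza, hzb⟩, hfz : f (g z) = z⟩ := hg z hz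
  obtain ⟨t, ⟨hat, htz⟩, hft⟩ : y ∈ f '' Icc a (g z) :=
    intermediate_value_Icc hza (hf.mono (Icc_subset_Icc_right hzb))
      ⟨hy.1, hyz.le.trans_eq hfz.symm⟩
  have hne : t ≠ g z := by
    rintro rfl
    exact hyz.ne (hft.symm.trans hfz)
  exact (csInf_le (hbdd y) ⟨⟨hat, htz.trans hzb⟩, hft⟩).trans_lt (htz.lt_of_ne hne)

lemma two_mul_sin_mul_sum_cos (a θ : ℝ) (n : ℕ) :
    2 * sin θ * ∑ m ∈ Finset.range n, cos ((a - 2 * m) * θ) =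
      sin ((a + 1) * θ) - sin ((a + 1 - 2 * n) * θ) := by
  have hterm (m : ℕ) : 2 * sin θ * cos ((a - 2 * m) * θ) =
      sin ((a + 1 - 2 * m) * θ) - sin ((a + 1 - 2 * (m + 1 : ℕ)) * θ) := by
    rw [Real.sin_sub_sin]
    push_cast
    ring_nf
  rw [Finset.mul_sum, Finset.sum_congr rfl fun m _ ↦ hterm m, Finset.sum_range_sub']
  simp

lemma sum_cos_eq_sin_div_sin {θ : ℝ} (hθ : sin θ ≠ 0) (n : ℕ) :
    ∑ m ∈ Finset.range n, cos ((n - 1 - 2 * m) * θ) = sin (n * θ) / sin θ := by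
  have h := two_mul_sin_mul_sum_cos (n - 1) θ n
  rw [show ((n : ℝ) - 1 + 1 - 2 * n) * θ = -(n * θ) by ring, Real.sin_neg, sub_add_cancel] at h
  rw [eq_div_iff hθ]
  linarith

lemma abs_sum_cos_le_card {ι : Type*} (s : Finset ι) (x : ι → ℝ) :
    |∑ i ∈ s, cos (x i)| ≤ s.card :=
  calc |∑ i ∈ s, cos (x i)|
    _ ≤ ∑ i ∈ s, |cos (x i)| := s.abs_sum_le_sum_abs _
    _ ≤ s.card • (1 : ℝ) := s.sum_le_card_nsmul _ _ fun i _ ↦ Real.abs_cos_le_one (x i)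
    _ = s.card := by simp

lemma re_exp_mul_I_mul (t : ℝ) (z : ℂ) : (exp (t * I) * z).re = ‖z‖ * cos (t + z.arg) := by
  conv_lhs => rw [← Complex.norm_mul_exp_arg_mul_I z]
  rw [mul_left_comm, ← Complex.exp_add, ← add_mul, ← Complex.ofReal_add, Complex.re_ofReal_mul,
    Complex.exp_ofReal_mul_I_re]

/-- The factor `A(θ) = 2 + c e ^ (-2iθ) - 2i e ^ (-3iθ) / sin θ` for which `Re (e ^ (itθ) A(θ))` is
`2 cos (tθ) + c cos ((t - 2)θ) + 2 sin ((t - 3)θ) / sin θ`. It describes `w_k` for `c = π² / 3`, up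
to replacing `2 / (1 - 2 ^ (1 - 2k))` by `2`. -/
noncomputable def amplitude (c θ : ℝ) : ℂ :=
  2 + c * exp ((-(2 * θ) : ℝ) * I) - (2 / sin θ : ℝ) * (I * exp ((-(3 * θ) : ℝ) * I))

lemma re_exp_mul_I_mul_amplitude (c t θ : ℝ) :
    (exp ((t * θ : ℝ) * I) * amplitude c θ).re =
      2 * cos (t * θ) + c * cos ((t - 2) * θ) + 2 * (sin ((t - 3) * θ) / sin θ) := by
  have hexp (x : ℝ) :
      exp ((t * θ : ℝ) * I) * exp ((-(x * θ) : ℝ) * I) = exp (((t - x) * θ : ℝ) * I) := by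
    rw [← Complex.exp_add]
    push_cast
    ring_nf
  have hmul : exp ((t * θ : ℝ) * I) * amplitude c θ =
      (2 : ℝ) * exp ((t * θ : ℝ) * I) + c * exp (((t - 2) * θ : ℝ) * I) -
        (2 / sin θ : ℝ) * (I * exp (((t - 3) * θ : ℝ) * I)) := by
    rw [amplitude, ← hexp, ← hexp]
    push_cast
    ring
  rw [hmul]
  simp only [Complex.sub_re, Complex.add_re, Complex.re_ofReal_mul, Complex.I_mul_re,
    Complex.exp_ofReal_mul_I_re, Complex.exp_ofReal_mul_I_im]
  ring

section amplitude

variable {c θ : ℝ}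

lemma amplitude_re (hθ : sin θ ≠ 0) :
    (amplitude c θ).re = (c - 4) * cos (2 * θ) := by
  have h : (amplitude c θ).re = 2 + c * cos (2 * θ) - 2 / sin θ * sin (3 * θ) := by
    simp only [amplitude, Complex.sub_re, Complex.add_re, Complex.re_ofNat, Complex.re_ofReal_mul,
      Complex.I_mul_re, Complex.exp_ofReal_mul_I_re, Complex.exp_ofReal_mul_I_im, Real.cos_neg,
      Real.sin_neg, neg_neg]
  rw [h, Real.sin_three_mul, Real.cos_two_mul']
  field_simp
  linear_combination 4 * Real.sin_sq_add_cos_sq θ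

lemma amplitude_im (hθ : sin θ ≠ 0) :
    (amplitude c θ).im = -2 * (cos θ / sin θ) * (cos θ ^ 2 + (c - 3) * sin θ ^ 2) := by
  have h : (amplitude c θ).im = -(c * sin (2 * θ)) - 2 / sin θ * cos (3 * θ) := by
    simp only [amplitude, Complex.sub_im, Complex.add_im, Complex.im_ofNat, Complex.im_ofReal_mul,
      Complex.I_mul_im, Complex.exp_ofReal_mul_I_re, Complex.exp_ofReal_mul_I_im, Real.cos_neg,
      Real.sin_neg, mul_neg, zero_add]
  rw [h, Real.cos_three_mul, Real.sin_two_mul]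
  field_simp
  linear_combination (-3 * cos θ) * Real.sin_sq_add_cos_sq θ

lemma cos_sq_add_mul_sin_sq_pos (hc : 3 < c) (hθ : sin θ ≠ 0) :
    0 < cos θ ^ 2 + (c - 3) * sin θ ^ 2 := by
  have := sub_pos.2 hc
  positivity

lemma amplitude_im_neg (hc : 3 < c) (hθ : θ ∈ Ioo 0 (π / 2)) : (amplitude c θ).im < 0 := by
  have hsin : 0 < sin θ := Real.sin_pos_of_pos_of_lt_pi hθ.1 (by linarith [hθ.1, hθ.2])
  have hcos : 0 < cos θ := Real.cos_pos_of_mem_Ioo ⟨by linarith [hθ.1, hθ.2], hθ.2⟩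
  have := mul_pos (div_pos hcos hsin) (cos_sq_add_mul_sin_sq_pos hc hsin.ne')
  rw [amplitude_im hsin.ne']
  linarith

lemma amplitude_im_pos (hc : 3 < c) (hθ : θ ∈ Ioo (π / 2) π) : 0 < (amplitude c θ).im := by
  have hsin : 0 < sin θ := Real.sin_pos_of_pos_of_lt_pi (by linarith [hθ.1, hθ.2]) hθ.2
  have hcos : cos θ < 0 := Real.cos_neg_of_pi_div_two_lt_of_lt hθ.1 (by linarith [hθ.1, hθ.2])
  have := mul_neg_of_neg_of_pos (div_neg_of_neg_of_pos hcos hsin)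
    (cos_sq_add_mul_sin_sq_pos hc hsin.ne')
  rw [amplitude_im hsin.ne']
  linarith

lemma amplitude_re_neg (hc : c < 4) (hθ : θ ∈ Ioo (3 * π / 4) π) : (amplitude c θ).re < 0 := by
  have hsin : 0 < sin θ := Real.sin_pos_of_pos_of_lt_pi (by linarith [hθ.1, hθ.2]) hθ.2
  have hcos : 0 < cos (2 * θ) := by
    rw [← Real.cos_two_pi_sub]
    exact Real.cos_pos_of_mem_Ioo ⟨by linarith [hθ.1, hθ.2], by linarith [hθ.1]⟩
  rw [amplitude_re hsin.ne']
  exact mul_neg_of_neg_of_pos (sub_neg.2 hc) hcos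

lemma pi_div_two_lt_arg_amplitude (hc : c ∈ Ioo 3 4) (hθ : θ ∈ Ioo (3 * π / 4) π) :
    π / 2 < (amplitude c θ).arg := by
  have hre := amplitude_re_neg hc.2 hθ
  have him := amplitude_im_pos hc.1 (Ioo_subset_Ioo_left (by linarith [Real.pi_pos]) hθ)
  exact not_le.1 (mt Complex.arg_le_pi_div_two_iff.1 (not_or.2 ⟨hre.not_ge, him.not_gt⟩))

lemma amplitude_mem_slitPlane (hc : c ∈ Ioo 3 4) (hθ : sin θ ≠ 0) :
    amplitude c θ ∈ Complex.slitPlane := by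
  rw [Complex.mem_slitPlane_iff, amplitude_re hθ, amplitude_im hθ]
  by_cases hcos : cos θ = 0
  · left
    rw [Real.cos_two_mul, hcos]
    linarith [hc.2]
  · right
    have := cos_sq_add_mul_sin_sq_pos hc.1 hθ
    positivity

/-- The real part is large when `sin² θ ≥ 0.8`, and the imaginary part when `sin² θ ≤ 0.8`. -/
lemma two_fifths_lt_norm_amplitude (hc : c ∈ Ioo 3.25 3.3) (hθ : sin θ ≠ 0) :
    0.4 < ‖amplitude c θ‖ := by
  obtain ⟨hc₁, hc₂⟩ := hc
  have hsin : 0 < sin θ ^ 2 := by positivity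
  have hcos : cos θ ^ 2 = 1 - sin θ ^ 2 := Real.cos_sq' θ
  rcases le_total (sin θ ^ 2) 0.8 with h | h
  · refine (lt_of_pow_lt_pow_left₀ 2 (abs_nonneg _) ?_).trans_le (Complex.abs_im_le_norm _)
    have hcot : 0.25 ≤ (cos θ / sin θ) ^ 2 := by
      rw [div_pow, le_div_iff₀ hsin, hcos]
      linarith
    have hfactor : 0.4 < cos θ ^ 2 + (c - 3) * sin θ ^ 2 := by
      rw [hcos]
      nlinarith
    rw [sq_abs, amplitude_im hθ, mul_pow, mul_pow]
    nlinarith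
  · refine lt_of_lt_of_le ?_ ((le_abs_self _).trans (Complex.abs_re_le_norm _))
    rw [amplitude_re hθ, Real.cos_two_mul, hcos]
    nlinarith

lemma continuousAt_amplitude (hθ : sin θ ≠ 0) : ContinuousAt (amplitude c) θ := by
  have : (sin θ : ℂ) ≠ 0 := mod_cast hθ
  unfold amplitude
  fun_prop (disch := assumption)

lemma continuousAt_arg_amplitude (hc : c ∈ Ioo 3 4) (hθ : sin θ ≠ 0) :
    ContinuousAt (fun x ↦ (amplitude c x).arg) θ :=
  (Complex.continuousAt_arg (amplitude_mem_slitPlane hc hθ)).comp (continuousAt_amplitude hθ)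

lemma exists_strictMonoOn_add_arg_amplitude_eq (hc : c ∈ Ioo 3 4) {k : ℕ} (hk : 3 ≤ k) :
    ∃ q : ℕ → ℝ, StrictMonoOn q (Icc 1 k) ∧ ∀ j ∈ Icc 1 k,
      q j ∈ Ioo 0 π ∧ k * q j + (amplitude c (q j)).arg = j * π := by
  have hpi := Real.pi_pos
  have hk₀ : (0 : ℝ) < k := by positivity
  set δ := π / k
  have hkδ : k * δ = π := mul_div_cancel₀ π hk₀.ne'
  have hδ₀ : 0 < δ := by positivity
  have hδ₃ : δ ≤ π / 3 := div_le_div_of_nonneg_left hpi.le three_pos (mod_cast hk)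
  let φ (θ : ℝ) : ℝ := k * θ + (amplitude c θ).arg
  have hleft : φ δ < π := by
    have := Complex.arg_neg_iff.2 (amplitude_im_neg hc.1 (θ := δ) ⟨hδ₀, by linarith⟩)
    simp only [φ]
    linarith
  have hright : k * π < φ (π - δ / 2) := by
    have := pi_div_two_lt_arg_amplitude hc (θ := π - δ / 2) ⟨by linarith, by linarith⟩
    simp only [φ]
    linarith
  have hsub : Icc δ (π - δ / 2) ⊆ Ioo 0 π := Icc_subset_Ioo hδ₀ (by linarith)
  have hφ : ContinuousOn φ (Icc δ (π - δ / 2)) := fun θ hθ ↦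
    ((continuous_const_mul _).continuousAt.add (continuousAt_arg_amplitude hc
      (Real.sin_pos_of_mem_Ioo (hsub hθ)).ne')).continuousWithinAt
  obtain ⟨g, hmono, hmaps, hinv⟩ := exists_strictMonoOn_rightInvOn_Icc (by linarith) hφ
  have hmem : MapsTo (fun j : ℕ ↦ j * π) (Icc 1 k) (Icc (φ δ) (φ (π - δ / 2))) := fun j hj ↦
    have hj₁ : (1 : ℝ) ≤ j := mod_cast hj.1
    have hjk : (j : ℝ) ≤ k := mod_cast hj.2
    ⟨hleft.le.trans (le_mul_of_one_le_left hpi.le hj₁),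
      (mul_le_mul_of_nonneg_right hjk hpi.le).trans hright.le⟩
  exact ⟨fun j ↦ g (j * π), hmono.comp (fun i _ j _ hij ↦ by gcongr) hmem,
    fun j hj ↦ ⟨hsub (hmaps (hmem hj)), hinv (hmem hj)⟩⟩

end amplitude

lemma two_div_one_sub_two_zpow {k : ℕ} (hk : 0 < k) :
    2 / (1 - (2 : ℝ) ^ (1 - 2 * (k : ℤ))) = 2 + 4 / (4 ^ k - 2) := by
  have hfour : (4 : ℝ) ≤ 4 ^ k := le_self_pow₀ (by norm_num) hk.ne'
  have hne : (4 : ℝ) ^ k - 2 ≠ 0 := by linarith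
  have hpow : (2 : ℝ) ^ (1 - 2 * (k : ℤ)) = 2 / 4 ^ k := by
    rw [zpow_sub₀ two_ne_zero, zpow_one, zpow_mul, zpow_natCast]
    norm_num
  rw [hpow]
  field_simp
  ring

lemma abs_wfun_sub_re_exp_mul_amplitude_le {k : ℕ} {θ : ℝ} (hk : 3 ≤ k) (hθ : sin θ ≠ 0) :
    |wfun k θ - (exp ((k * θ : ℝ) * I) * amplitude (π ^ 2 / 3) θ).re| ≤ 0.1 := by
  obtain ⟨n, rfl⟩ := Nat.exists_eq_add_of_le' hk
  have hdiff : wfun (n + 3) θ -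
      (exp (((n + 3 : ℕ) * θ : ℝ) * I) * amplitude (π ^ 2 / 3) θ).re =
      4 / (4 ^ (n + 3) - 2) * ∑ m ∈ Finset.range n, cos ((n - 1 - 2 * m) * θ) := by
    rw [re_exp_mul_I_mul_amplitude, wfun, two_div_one_sub_two_zpow (by omega),
      show ((n + 3 : ℕ) : ℝ) - 3 = n by push_cast; ring, ← sum_cos_eq_sin_div_sin hθ,
      show ((n + 3 : ℕ) : ℝ) - 4 = n - 1 by push_cast; ring, Nat.add_sub_cancel]
    ring
  have hpow : (n : ℝ) + 1 ≤ 4 ^ n := mod_cast Nat.lt_pow_self (by norm_num)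
  have hden : (0 : ℝ) < 4 ^ (n + 3) - 2 := by
    rw [pow_add]
    linarith [n.cast_nonneg (α := ℝ)]
  rw [hdiff, abs_mul, abs_of_pos (by positivity)]
  calc 4 / (4 ^ (n + 3) - 2) * |∑ m ∈ Finset.range n, cos ((n - 1 - 2 * m) * θ)|
    _ ≤ 4 / (4 ^ (n + 3) - 2) * n := by
      gcongr
      simpa using abs_sum_cos_le_card (Finset.range n) fun m ↦ (n - 1 - 2 * m) * θ
    _ ≤ 0.1 := by
      rw [div_mul_eq_mul_div, div_le_iff₀ hden, pow_add]
      linarith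

lemma wfun_even (k : ℕ) : (wfun k).Even := fun θ ↦ by simp only [wfun, mul_neg, Real.cos_neg]

lemma pi_sq_div_three_mem_Ioo : π ^ 2 / 3 ∈ Ioo 3.25 3.3 :=
  ⟨by nlinarith [Real.pi_gt_d2], by nlinarith [Real.pi_lt_d4, Real.pi_pos]⟩

lemma two_lt_wfun_zero {k : ℕ} (hk : 0 < k) : 2 < wfun k 0 := by
  have hfour : (4 : ℝ) ≤ 4 ^ k := le_self_pow₀ (by norm_num) hk.ne'
  have hden : (0 : ℝ) < 4 ^ k - 2 := by linarith
  simp only [wfun, mul_zero, Real.cos_zero, two_div_one_sub_two_zpow hk, mul_one, add_assoc]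
  exact lt_add_of_pos_right 2 (by positivity)

lemma lt_neg_one_pow_mul_wfun {k : ℕ} {θ : ℝ} (hk : 3 ≤ k) (hθ : sin θ ≠ 0) {j : ℕ}
    (hphase : k * θ + (amplitude (π ^ 2 / 3) θ).arg = j * π) : 0.3 < (-1) ^ j * wfun k θ := by
  have hnorm := two_fifths_lt_norm_amplitude pi_sq_div_three_mem_Ioo hθ
  have hclose := abs_le.1 (abs_wfun_sub_re_exp_mul_amplitude_le hk hθ)
  rw [re_exp_mul_I_mul, hphase, Real.cos_nat_mul_pi] at hclose
  rcases neg_one_pow_eq_or ℝ j with hj | hj <;> rw [hj] at hclose ⊢ <;>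
    linarith [hclose.1, hclose.2]

theorem wfun_alternating_general {k : ℕ} (hk : 3 ≤ k) :
    IsAlternating (wfun k) (-π) π (2 * k) 0.3 := by
  have hc : π ^ 2 / 3 ∈ Ioo 3 4 :=
    Ioo_subset_Ioo (by norm_num) (by norm_num) pi_sq_div_three_mem_Ioo
  obtain ⟨q, hmono, hq⟩ := exists_strictMonoOn_add_arg_amplitude_eq hc hk
  exact .of_even (wfun_even k) (by norm_num) Real.pi_pos
    ((two_lt_wfun_zero (by omega)).trans' (by norm_num)) hmono (fun j hj ↦ (hq j hj).1)
    fun j hj ↦ lt_neg_one_pow_mul_wfun hk (Real.sin_pos_of_mem_Ioo (hq j hj).1).ne' (hq j hj).2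

/-- For `k > 10`, `w_k` is an alternating function of order `2k` on `(−π, π)`
with oscillation distance `0.3`. -/
theorem wfun_alternating (k : ℕ) (hk : 10 < k) :
    ∃ p : Fin (2 * k + 1) → ℝ, StrictMono p ∧
      (∀ i, p i ∈ Set.Ioo (-Real.pi) Real.pi) ∧
      (∀ i, (0.3 : ℝ) < |wfun k (p i)|) ∧
      (∀ i : Fin (2 * k), wfun k (p i.castSucc) * wfun k (p i.succ) < 0) :=
  wfun_alternating_general (by omega)
end

section
/- Let k > 5 be an integer and define q_k : ℝ → ℝ by q_k(θ) = 2 cos((k−2)θ) + (4/π) sin((k−1)θ) + (8(1−2^{3−2k})/(π²(1−2^{2−2k}))) ∑_{m=0}^{k−4} cos((k−4−2m)θ), where the sum ∑_{m=0}^{k−4} cos((k−4−2m)θ) is the continuous extension of sin((k−3)θ)/sin θ. Then q_k is an alternating function of order 2k−2 on (−π, π) with oscillation distance 0.03; that is, there exist points −π < p_1 < p_2 < … < p_{2k−1} < π such that |q_k(p_i)| > 0.03 for each i and q_k(p_i)·q_k(p_{i+1}) < 0 for each i ∈ {1,…,2k−2}. -/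
/-- The trigonometric polynomial
`q_k(θ) = 2 cos((k−2)θ) + (4/π) sin((k−1)θ)
+ (8(1−2^{3−2k})/(π²(1−2^{2−2k}))) ∑_{m=0}^{k−4} cos((k−4−2m)θ)`,
where the last sum is the continuous extension of `sin((k−3)θ)/sin θ`. -/
noncomputable def qfun (k : ℕ) (θ : ℝ) : ℝ :=
  2 * Real.cos (((k : ℝ) - 2) * θ) + 4 / Real.pi * Real.sin (((k : ℝ) - 1) * θ)
  + 8 * (1 - (2 : ℝ) ^ (3 - 2 * (k : ℤ))) / (Real.pi ^ 2 * (1 - (2 : ℝ) ^ (2 - 2 * (k : ℤ)))) *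
      ∑ m ∈ Finset.range (k - 3), Real.cos (((k : ℝ) - 4 - 2 * m) * θ)

/-!
At the zeros of `cos ((k - 1) θ)` in `(0, π)` and of `cos ((k + 1) θ)` in `(-π, 0)` the three
frequencies `k - 2`, `k - 1`, `k - 3` differ from the vanishing one by a small integer, so that
`q_k θ` equals `± 1` times a function of `sin θ` alone that does not depend on `k` except through
the coefficient of the last sum. That function exceeds `0.03` throughout, whence the sign of `q_k`
alternates along the zeros on each side of `0`. The zero `π / (2 (k - 1))` is left out because its
sign agrees with that of its left neighbour `-π / (2 (k + 1))`.
-/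

open Real

lemma sin_mul_sum_cos_symmetric (n : ℕ) (θ : ℝ) :
    sin θ * ∑ m ∈ Finset.range n, cos ((n - 1 - 2 * m) * θ) = sin (n * θ) := by
  have progression := Real.sin_mul_sum_cos n (2 * θ) (-((n - 1) * θ))
  have term_eq (m : ℕ) : cos (2 * θ * m + -((n - 1) * θ)) = cos ((n - 1 - 2 * m) * θ) := by
    rw [← cos_neg]
    ring_nf
  have sum_angle : (n : ℝ) * (2 * θ) / 2 = n * θ := by ring
  have mean_angle : ((n : ℝ) - 1) * (2 * θ) / 2 + -((n - 1) * θ) = 0 := by ring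
  simpa only [term_eq, sum_angle, mean_angle, cos_zero, mul_one,
    mul_div_cancel_left₀ θ two_ne_zero] using progression

lemma cos_int_add_half_mul_pi_sub (j : ℤ) (x : ℝ) :
    cos ((j + 1 / 2) * π - x) = (-1) ^ j * sin x := by
  rw [show (j + 1 / 2) * π - x = π / 2 - x + j * π by ring, cos_add_int_mul_pi,
    cos_pi_div_two_sub]

lemma sin_int_add_half_mul_pi_sub (j : ℤ) (x : ℝ) :
    sin ((j + 1 / 2) * π - x) = (-1) ^ j * cos x := by
  rw [show (j + 1 / 2) * π - x = π / 2 - x + j * π by ring, sin_add_int_mul_pi,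
    sin_pi_div_two_sub]

lemma neg_one_zpow_mul_mul_neg_one_zpow_succ_mul_neg {r r' : ℝ} (hr : 0 < r) (hr' : 0 < r')
    (j : ℤ) : (-1) ^ j * r * ((-1) ^ (j + 1) * r') < 0 := by
  have product_eq : (-1) ^ j * r * ((-1) ^ (j + 1) * r') = -(r * r') := by
    rcases Int.even_or_odd j with hj | hj
    · rw [hj.neg_one_zpow, hj.add_one.neg_one_zpow]
      ring
    · rw [hj.neg_one_zpow, hj.add_one.neg_one_zpow]
      ring
  rw [product_eq]
  exact neg_neg_of_pos (mul_pos hr hr')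

/-- The coefficient of `sin ((k - 3) θ) / sin θ` in `q_k`. -/
noncomputable def qfunCoeff (k : ℕ) : ℝ :=
  8 * (1 - (2 : ℝ) ^ (3 - 2 * (k : ℤ))) / (π ^ 2 * (1 - (2 : ℝ) ^ (2 - 2 * (k : ℤ))))

lemma qfunCoeff_mem_Icc {k : ℕ} (hk : 4 ≤ k) : qfunCoeff k ∈ Set.Icc 0.79 0.82 := by
  have power_double : (2 : ℝ) ^ (3 - 2 * (k : ℤ)) = 2 * 2 ^ (2 - 2 * (k : ℤ)) := by
    rw [← zpow_one_add₀ two_ne_zero]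
    ring_nf
  have power_le : (2 : ℝ) ^ (2 - 2 * (k : ℤ)) ≤ 1 / 64 := calc
    (2 : ℝ) ^ (2 - 2 * (k : ℤ)) ≤ 2 ^ (-6 : ℤ) := zpow_le_zpow_right₀ one_le_two (by lia)
    _ = 1 / 64 := by norm_num
  have power_pos : (0 : ℝ) < 2 ^ (2 - 2 * (k : ℤ)) := by positivity
  rw [qfunCoeff, power_double]
  generalize (2 : ℝ) ^ (2 - 2 * (k : ℤ)) = ε at *
  have pi_sq_gt : 9.85 < π ^ 2 := by nlinarith [pi_gt_d2]
  have pi_sq_lt : π ^ 2 < 9.93 := by nlinarith [pi_lt_d2, pi_pos]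
  have denom_pos : 0 < π ^ 2 * (1 - ε) := mul_pos (by positivity) (by linarith)
  rw [Set.mem_Icc, le_div_iff₀ denom_pos, div_le_iff₀ denom_pos]
  constructor <;> nlinarith

lemma four_div_pi_mem_Icc : 4 / π ∈ Set.Icc 1.26 1.28 := by
  rw [Set.mem_Icc, le_div_iff₀ pi_pos, div_le_iff₀ pi_pos]
  constructor <;> linarith [pi_gt_d2, pi_lt_d2]

lemma qfun_eq {k : ℕ} (hk : 3 ≤ k) {θ : ℝ} (hθ : sin θ ≠ 0) :
    qfun k θ = 2 * cos ((k - 2) * θ) + 4 / π * sin ((k - 1) * θ) +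
      qfunCoeff k * (sin ((k - 3) * θ) / sin θ) := by
  have kernel := eq_div_of_mul_eq hθ ((mul_comm _ _).trans (sin_mul_sum_cos_symmetric (k - 3) θ))
  rw [Nat.cast_sub hk, Nat.cast_ofNat, sub_sub, show (3 + 1 : ℝ) = 4 by norm_num] at kernel
  rw [← kernel, qfun, qfunCoeff]

lemma qfun_eq_of_sub_one_mul {k : ℕ} (hk : 3 ≤ k) {θ : ℝ} (hθ : sin θ ≠ 0) {j : ℤ}
    (hj : (k - 1) * θ = (j + 1 / 2) * π) :
    qfun k θ = (-1) ^ j * (2 * sin θ + 4 / π + qfunCoeff k * (cos (2 * θ) / sin θ)) := by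
  have freq₁ : (k - 1) * θ = (j + 1 / 2) * π - 0 := by rw [hj, sub_zero]
  have freq₂ : (k - 2) * θ = (j + 1 / 2) * π - θ := by linear_combination hj
  have freq₃ : (k - 3) * θ = (j + 1 / 2) * π - 2 * θ := by linear_combination hj
  rw [qfun_eq hk hθ, freq₁, freq₂, freq₃, cos_int_add_half_mul_pi_sub,
    sin_int_add_half_mul_pi_sub, sin_int_add_half_mul_pi_sub, cos_zero]
  ring

lemma qfun_neg_eq_of_add_one_mul {k : ℕ} (hk : 3 ≤ k) {θ : ℝ} (hθ : sin θ ≠ 0) {j : ℤ}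
    (hj : (k + 1) * θ = (j + 1 / 2) * π) :
    qfun k (-θ) = (-1) ^ j *
      (2 * sin (3 * θ) - 4 / π * cos (2 * θ) + qfunCoeff k * (cos (4 * θ) / sin θ)) := by
  have freq₁ : (k - 1) * θ = (j + 1 / 2) * π - 2 * θ := by linear_combination hj
  have freq₂ : (k - 2) * θ = (j + 1 / 2) * π - 3 * θ := by linear_combination hj
  have freq₃ : (k - 3) * θ = (j + 1 / 2) * π - 4 * θ := by linear_combination hj
  have hθ' : sin (-θ) ≠ 0 := by rwa [sin_neg, neg_ne_zero]
  rw [qfun_eq hk hθ']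
  simp only [mul_neg, cos_neg, sin_neg, neg_div_neg_eq]
  rw [freq₁, freq₂, freq₃, cos_int_add_half_mul_pi_sub,
    sin_int_add_half_mul_pi_sub, sin_int_add_half_mul_pi_sub]
  ring

lemma two_mul_sin_add_mul_cos_two_mul_div_sin_nonneg {c θ : ℝ} (hc : c ∈ Set.Icc 0 1)
    (hθ : 0 < sin θ) : 0 ≤ 2 * sin θ + c * (cos (2 * θ) / sin θ) := by
  have expand : 2 * sin θ + c * (cos (2 * θ) / sin θ) = 2 * (1 - c) * sin θ + c / sin θ := by
    rw [cos_two_mul, cos_sq']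
    field_simp
    ring
  have := hc.1
  have := sub_nonneg.2 hc.2
  rw [expand]
  positivity

/- With `s = sin θ`, the quartic is `sin θ` times the left-branch value of `± q_k` at the midpoints
`1.27`, `0.805` of the coefficient ranges, less `0.03 s` and the total deviation `0.01 + 0.015`. -/
lemma quartic_pos {s : ℝ} (hs₀ : 0 ≤ s) (hs₁ : s ≤ 1) :
    0 < 0.78 - 1.3 * s - 0.44 * s ^ 2 + 2.54 * s ^ 3 - 1.56 * s ^ 4 := by
  have quadratic_nonneg : 0 ≤ 0.58 * s ^ 2 - 0.93 * s + 0.76 := by nlinarith [sq_nonneg (s - 0.8)]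
  have := sub_nonneg.2 hs₁
  calc
    0 < 0.02 + (1 - s) * (1.56 * s * (s - 0.5) ^ 2 + (0.58 * s ^ 2 - 0.93 * s + 0.76)) := by
      positivity
    _ = 0.78 - 1.3 * s - 0.44 * s ^ 2 + 2.54 * s ^ 3 - 1.56 * s ^ 4 := by ring

lemma lt_two_mul_sin_three_mul_sub_add {u c θ : ℝ} (hu : u ∈ Set.Icc 1.26 1.28)
    (hc : c ∈ Set.Icc 0.79 0.82) (hθ : 0 < sin θ) :
    0.03 < 2 * sin (3 * θ) - u * cos (2 * θ) + c * (cos (4 * θ) / sin θ) := by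
  have u_error : (u - 1.27) * (cos (2 * θ) * sin θ) ≤ 0.01 := by
    refine (le_abs_self _).trans ?_
    rw [abs_mul, abs_mul, ← mul_one (0.01 : ℝ)]
    gcongr
    · exact abs_le.2 ⟨by linarith [hu.1], by linarith [hu.2]⟩
    · exact mul_le_one₀ (abs_cos_le_one _) (abs_nonneg _) (abs_sin_le_one _)
  have c_error : -0.015 ≤ (c - 0.805) * cos (4 * θ) := by
    refine (abs_le.1 ?_).1
    rw [abs_mul, ← mul_one (0.015 : ℝ)]
    gcongr
    · exact abs_le.2 ⟨by linarith [hc.1], by linarith [hc.2]⟩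
    · exact abs_cos_le_one _
  have cos_four : cos (4 * θ) = 8 * sin θ ^ 4 - 8 * sin θ ^ 2 + 1 := by
    rw [show 4 * θ = 2 * (2 * θ) by ring, cos_two_mul, cos_two_mul, cos_sq']
    ring
  have cos_two : cos (2 * θ) = 1 - 2 * sin θ ^ 2 := by
    rw [cos_two_mul, cos_sq']
    ring
  have clear_denom : (2 * sin (3 * θ) - u * cos (2 * θ) + c * (cos (4 * θ) / sin θ)) * sin θ =
      2 * sin (3 * θ) * sin θ - u * (cos (2 * θ) * sin θ) + c * cos (4 * θ) := by
    field_simp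
  refine lt_of_mul_lt_mul_right ?_ hθ.le
  rw [clear_denom]
  rw [cos_four] at c_error ⊢
  rw [cos_two] at u_error ⊢
  rw [sin_three_mul]
  linarith [quartic_pos hθ.le (sin_le_one θ)]

/-- The points at which `q_k` alternates, indexed so that `q_k` has the sign of `(-1) ^ j` at the
`j`-th one: for `j ≤ 0` a zero of `cos ((k + 1) θ)`, for `j > 0` a zero of `cos ((k - 1) θ)`. -/
noncomputable def qfunNode (k : ℕ) (j : ℤ) : ℝ :=
  if j ≤ 0 then -((-j + 1 / 2) * π / (k + 1)) else (j + 1 / 2) * π / (k - 1)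

lemma strictMono_qfunNode {k : ℕ} (hk : 2 ≤ k) : StrictMono (qfunNode k) := by
  intro i j hij
  have hk' : (0 : ℝ) < k - 1 := sub_pos.2 (by exact_mod_cast hk)
  unfold qfunNode
  split_ifs with hi hj hj
  · gcongr
  · have : (0 : ℝ) ≤ -i := neg_nonneg.2 (by exact_mod_cast hi)
    have : (0 : ℝ) < j := by exact_mod_cast not_le.1 hj
    exact (neg_neg_of_pos (by positivity)).trans (by positivity)
  · lia
  · gcongr

lemma mul_pi_div_mem_Ioo {x a : ℝ} (hx : 0 < x) (hxa : x < a) : x * π / a ∈ Set.Ioo 0 π := by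
  have ha := hx.trans hxa
  refine ⟨by positivity, ?_⟩
  rw [div_lt_iff₀ ha, mul_comm π]
  gcongr

lemma neg_qfunNode_mem_Ioo_zero_pi {k : ℕ} {j : ℤ} (hj₀ : j ≤ 0) (hjk : -k ≤ j) :
    -qfunNode k j ∈ Set.Ioo 0 π := by
  have : (j : ℝ) ≤ 0 := by exact_mod_cast hj₀
  have : (-k : ℝ) ≤ j := by exact_mod_cast hjk
  rw [qfunNode, if_pos hj₀, neg_neg]
  exact mul_pi_div_mem_Ioo (by linarith) (by linarith)

lemma qfunNode_mem_Ioo_zero_pi {k : ℕ} {j : ℤ} (hj₀ : 0 < j) (hjk : j ≤ k - 2) :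
    qfunNode k j ∈ Set.Ioo 0 π := by
  have : (0 : ℝ) < j := by exact_mod_cast hj₀
  have : (j : ℝ) ≤ k - 2 := by exact_mod_cast hjk
  rw [qfunNode, if_neg hj₀.not_ge]
  exact mul_pi_div_mem_Ioo (by linarith) (by linarith)

lemma qfunNode_mem_Ioo {k : ℕ} {j : ℤ} (hj : j ∈ Set.Icc (-k : ℤ) (k - 2)) :
    qfunNode k j ∈ Set.Ioo (-π) π := by
  rcases le_or_gt j 0 with hj₀ | hj₀
  · have := neg_qfunNode_mem_Ioo_zero_pi hj₀ hj.1
    exact ⟨by linarith [this.2], by linarith [this.1, pi_pos]⟩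
  · have := qfunNode_mem_Ioo_zero_pi hj₀ hj.2
    exact ⟨by linarith [this.1, pi_pos], this.2⟩

lemma exists_qfun_qfunNode_eq_of_nonpos {k : ℕ} {j : ℤ} (hk : 4 ≤ k) (hj₀ : j ≤ 0)
    (hjk : -k ≤ j) : ∃ r : ℝ, 0.03 < r ∧ qfun k (qfunNode k j) = (-1) ^ j * r := by
  have sin_pos := sin_pos_of_mem_Ioo (neg_qfunNode_mem_Ioo_zero_pi hj₀ hjk)
  have node_eq : (k + 1) * -qfunNode k j = ((-j : ℤ) + 1 / 2) * π := by
    rw [qfunNode, if_pos hj₀, neg_neg, Int.cast_neg]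
    exact mul_div_cancel₀ _ (by positivity)
  have value := qfun_neg_eq_of_add_one_mul (by lia) sin_pos.ne' node_eq
  rw [neg_neg, zpow_neg, ← inv_zpow, inv_neg_one] at value
  exact ⟨_, lt_two_mul_sin_three_mul_sub_add four_div_pi_mem_Icc (qfunCoeff_mem_Icc hk) sin_pos,
    value⟩

lemma exists_qfun_qfunNode_eq_of_pos {k : ℕ} {j : ℤ} (hk : 4 ≤ k) (hj₀ : 0 < j)
    (hjk : j ≤ k - 2) : ∃ r : ℝ, 0.03 < r ∧ qfun k (qfunNode k j) = (-1) ^ j * r := by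
  have sin_pos := sin_pos_of_mem_Ioo (qfunNode_mem_Ioo_zero_pi hj₀ hjk)
  have node_eq : (k - 1) * qfunNode k j = (j + 1 / 2) * π := by
    rw [qfunNode, if_neg hj₀.not_ge]
    exact mul_div_cancel₀ _ (sub_ne_zero.2 (by exact_mod_cast (by lia : k ≠ 1)))
  have coeff_mem : qfunCoeff k ∈ Set.Icc 0 1 :=
    Set.Icc_subset_Icc (by norm_num) (by norm_num) (qfunCoeff_mem_Icc hk)
  refine ⟨_, ?_, qfun_eq_of_sub_one_mul (by lia) sin_pos.ne' node_eq⟩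
  linarith [four_div_pi_mem_Icc.1,
    two_mul_sin_add_mul_cos_two_mul_div_sin_nonneg coeff_mem sin_pos]

lemma exists_qfun_qfunNode_eq {k : ℕ} {j : ℤ} (hk : 4 ≤ k) (hj : j ∈ Set.Icc (-k : ℤ) (k - 2)) :
    ∃ r : ℝ, 0.03 < r ∧ qfun k (qfunNode k j) = (-1) ^ j * r :=
  (le_or_gt j 0).elim (exists_qfun_qfunNode_eq_of_nonpos hk · hj.1)
    (exists_qfun_qfunNode_eq_of_pos hk · hj.2)

theorem qfun_alternating_general (k : ℕ) (hk : 4 ≤ k) :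
    ∃ p : Fin (2 * k - 2 + 1) → ℝ, StrictMono p ∧
      (∀ i, p i ∈ Set.Ioo (-π) π) ∧
      (∀ i, (0.03 : ℝ) < |qfun k (p i)|) ∧
      (∀ i : Fin (2 * k - 2), qfun k (p i.castSucc) * qfun k (p i.succ) < 0) := by
  have index_mem (i : Fin (2 * k - 2 + 1)) : (i - k : ℤ) ∈ Set.Icc (-k : ℤ) (k - 2) := by
    have := i.isLt
    exact ⟨by lia, by lia⟩
  refine ⟨fun i ↦ qfunNode k (i - k), fun i j hij ↦ ?_, fun i ↦ ?_, fun i ↦ ?_, fun i ↦ ?_⟩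
  · have : (i : ℕ) < j := hij
    exact strictMono_qfunNode (by lia) (by lia)
  · exact qfunNode_mem_Ioo (index_mem i)
  · obtain ⟨r, hr, value⟩ := exists_qfun_qfunNode_eq hk (index_mem i)
    simpa [value, abs_mul] using hr.trans_le (le_abs_self r)
  · obtain ⟨r, hr, value⟩ := exists_qfun_qfunNode_eq hk (index_mem i.castSucc)
    obtain ⟨r', hr', value'⟩ := exists_qfun_qfunNode_eq hk (index_mem i.succ)
    have index_succ : (i.succ - k : ℤ) = i.castSucc - k + 1 := by
      rw [Fin.val_succ, Fin.val_castSucc]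
      lia
    rw [value, value', index_succ]
    exact neg_one_zpow_mul_mul_neg_one_zpow_succ_mul_neg (by linarith) (by linarith) _

/-- For `k > 5`, `q_k` is an alternating function of order `2k−2` on `(−π, π)`
with oscillation distance `0.03`. -/
theorem qfun_alternating (k : ℕ) (hk : 5 < k) :
    ∃ p : Fin (2 * k - 2 + 1) → ℝ, StrictMono p ∧
      (∀ i, p i ∈ Set.Ioo (-Real.pi) Real.pi) ∧
      (∀ i, (0.03 : ℝ) < |qfun k (p i)|) ∧
      (∀ i : Fin (2 * k - 2), qfun k (p i.castSucc) * qfun k (p i.succ) < 0) :=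
  qfun_alternating_general k (by lia)
end

section
/- For every integer k ≥ 0, ∑_{j=0}^{k} C(2k,2j) E_{2j} E_{2k−2j} = 2^{2k+1}(2^{2k+2}−1) B_{2k+2}/(k+1). (For example, for k = 1 both sides equal −2.) -/
/-- Auxiliary: `eulerEvenAux m` is the Euler number `E_{2m}`, defined via the
recurrence `∑_{j=0}^{n} C(2n,2j) E_{2j} = 0` for `n ≥ 1`, with `E_0 = 1`. -/
def eulerEvenAux : ℕ → ℚ
  | 0 => 1
  | m + 1 => -∑ j ∈ (Finset.range (m + 1)).attach,
      ((Nat.choose (2 * (m + 1)) (2 * (j : ℕ))) : ℚ) * eulerEvenAux j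
decreasing_by exact Finset.mem_range.mp j.2

/-- The Euler numbers: `E_0 = 1`, `E_n = 0` for odd `n`, and
`∑_{j=0}^{n} C(2n,2j) E_{2j} = 0` for every `n ≥ 1`. -/
def eulerE (n : ℕ) : ℚ := if n % 2 = 1 then 0 else eulerEvenAux (n / 2)

/-!
The exponential generating function of the Euler numbers is `sech`, so the convolution on the left
is a coefficient of `sech ^ 2`, the derivative of `tanh`. Writing `β(t) = t / (exp t - 1)` for the
generating function of the Bernoulli numbers, the identity
`tanh t = 1 - 2 / (exp (2 t) - 1) + 4 / (exp (4 t) - 1)` gives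
`t * tanh t = t - β(2 t) + β(4 t)`, from which the coefficients of `tanh` can be read off.
-/

open PowerSeries Finset
open scoped Nat

section GeneratingFunction

variable {K : Type*} [Field K]

/-- The exponential generating function `∑ aₙ Xⁿ / n!` of a sequence `a`. -/
noncomputable def egf (a : ℕ → K) : K⟦X⟧ := mk fun n => a n / n !

theorem coeff_egf (a : ℕ → K) (n : ℕ) : coeff n (egf a) = a n / n ! := coeff_mk _ _

variable [CharZero K]

theorem coeff_egf_mul_egf (a b : ℕ → K) (n : ℕ) :
    coeff n (egf a * egf b) = (∑ i ∈ range (n + 1), n.choose i * a i * b (n - i)) / n ! := by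
  rw [coeff_mul, Finset.Nat.sum_antidiagonal_eq_sum_range_succ_mk, sum_div]
  refine sum_congr rfl fun i hi => ?_
  have hn : (n ! : K) ≠ 0 := mod_cast n.factorial_ne_zero
  rw [coeff_egf, coeff_egf, Nat.cast_choose K (mem_range_succ_iff.mp hi)]
  field_simp

theorem derivative_egf (a : ℕ → K) : d⁄dX K (egf a) = egf fun n => a (n + 1) := by
  ext n
  have hn : (n ! : K) ≠ 0 := mod_cast n.factorial_ne_zero
  have hn' : (n : K) + 1 ≠ 0 := mod_cast n.succ_ne_zero
  rw [coeff_derivative, coeff_egf, coeff_egf, Nat.factorial_succ]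
  push_cast
  field_simp

end GeneratingFunction

section Hyperbolic

variable (K : Type*) [Field K]

/-- The power series of the hyperbolic cosine. -/
noncomputable def coshSeries : K⟦X⟧ := egf fun n => if Even n then 1 else 0

/-- The power series of the hyperbolic sine. -/
noncomputable def sinhSeries : K⟦X⟧ := egf fun n => if Even n then 0 else 1

/-- The power series of the hyperbolic tangent. -/
noncomputable def tanhSeries : K⟦X⟧ := sinhSeries K * (coshSeries K)⁻¹

theorem constantCoeff_coshSeries : constantCoeff (coshSeries K) = 1 := by
  simp [coshSeries, ← coeff_zero_eq_constantCoeff_apply, coeff_egf]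

theorem coshSeries_mul_inv_cancel : coshSeries K * (coshSeries K)⁻¹ = 1 :=
  PowerSeries.mul_inv_cancel _ (by simp [constantCoeff_coshSeries])

variable [CharZero K]

theorem derivative_coshSeries : d⁄dX K (coshSeries K) = sinhSeries K := by
  simp only [coshSeries, sinhSeries, derivative_egf, Nat.even_add_one, ite_not]

theorem derivative_sinhSeries : d⁄dX K (sinhSeries K) = coshSeries K := by
  simp only [coshSeries, sinhSeries, derivative_egf, Nat.even_add_one, ite_not]

theorem coshSeries_add_sinhSeries : coshSeries K + sinhSeries K = exp K := by
  ext n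
  by_cases hn : Even n <;> simp [coshSeries, sinhSeries, coeff_egf, coeff_exp, hn]

theorem coshSeries_sub_sinhSeries : coshSeries K - sinhSeries K = evalNegHom (exp K) := by
  ext n
  rw [evalNegHom, coeff_rescale]
  rcases n.even_or_odd with hn | hn
  · simp [coshSeries, sinhSeries, coeff_egf, coeff_exp, hn]
  · simp [coshSeries, sinhSeries, coeff_egf, coeff_exp, hn.neg_one_pow, Nat.not_even_iff_odd.mpr hn]

theorem coshSeries_sq_sub_sinhSeries_sq : coshSeries K ^ 2 - sinhSeries K ^ 2 = 1 := by
  rw [sq_sub_sq, coshSeries_add_sinhSeries, coshSeries_sub_sinhSeries, exp_mul_exp_neg_eq_one]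

theorem derivative_tanhSeries : d⁄dX K (tanhSeries K) = (coshSeries K)⁻¹ ^ 2 := by
  rw [tanhSeries, Derivation.leibniz, derivative_inv', derivative_coshSeries,
    derivative_sinhSeries, smul_eq_mul, smul_eq_mul]
  linear_combination (coshSeries K)⁻¹ ^ 2 * coshSeries_sq_sub_sinhSeries_sq K
    - coshSeries K * (coshSeries K)⁻¹ * coshSeries_mul_inv_cancel K

theorem tanhSeries_mul_exp_sq_add_one : tanhSeries K * (exp K ^ 2 + 1) = exp K ^ 2 - 1 := by
  rw [tanhSeries, ← coshSeries_add_sinhSeries]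
  linear_combination
    2 * sinhSeries K * (coshSeries K + sinhSeries K) * coshSeries_mul_inv_cancel K
      - (1 + sinhSeries K * (coshSeries K)⁻¹) * coshSeries_sq_sub_sinhSeries_sq K

end Hyperbolic

section Bernoulli

theorem rescale_bernoulliPowerSeries_mul_exp_pow_sub_one (A : Type*) [CommRing A] [Algebra ℚ A]
    (n : ℕ) : rescale (n : A) (bernoulliPowerSeries A) * (exp A ^ n - 1) = (n : A⟦X⟧) * X := by
  rw [exp_pow_eq_rescale_exp, ← map_one (rescale (n : A)), ← map_sub, ← map_mul,
    bernoulliPowerSeries_mul_exp_sub_one, rescale_X, map_natCast]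

variable (K : Type*) [Field K] [CharZero K]

theorem X_mul_tanhSeries :
    X * tanhSeries K =
      X - rescale 2 (bernoulliPowerSeries K) + rescale 4 (bernoulliPowerSeries K) := by
  have h₂ := rescale_bernoulliPowerSeries_mul_exp_pow_sub_one K 2
  have h₄ := rescale_bernoulliPowerSeries_mul_exp_pow_sub_one K 4
  push_cast at h₂ h₄
  have exp_pow_four_sub_one_ne_zero : exp K ^ 4 - 1 ≠ 0 := by
    have := algebraRat.charZero K⟦X⟧
    exact right_ne_zero_of_mul (h₄.trans_ne (mul_ne_zero (OfNat.ofNat_ne_zero 4) X_ne_zero))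
  apply mul_right_cancel₀ exp_pow_four_sub_one_ne_zero
  linear_combination
    X * (exp K ^ 2 - 1) * tanhSeries_mul_exp_sq_add_one K + (exp K ^ 2 + 1) * h₂ - h₄

theorem coeff_succ_tanhSeries (n : ℕ) :
    coeff (n + 1) (tanhSeries K) =
      2 ^ (n + 2) * (2 ^ (n + 2) - 1) * (bernoulli (n + 2) : K) / (n + 2)! := by
  rw [← coeff_succ_X_mul, X_mul_tanhSeries, map_add, map_sub, coeff_X, if_neg (by lia),
    coeff_rescale, coeff_rescale, bernoulliPowerSeries, coeff_mk, eq_ratCast,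
    show (4 : K) = 2 * 2 by norm_num, mul_pow]
  push_cast
  ring

end Bernoulli

section Euler

theorem sum_range_two_mul_add_one_of_odd_eq_zero {M : Type*} [AddCommMonoid M] {f : ℕ → M}
    (hf : ∀ i, Odd i → f i = 0) (m : ℕ) :
    ∑ i ∈ range (2 * m + 1), f i = ∑ j ∈ range (m + 1), f (2 * j) := by
  induction m with
  | zero => simp
  | succ m ih =>
    rw [sum_range_succ _ (m + 1), ← ih, mul_add_one, sum_range_succ, sum_range_succ,
      hf _ (odd_two_mul_add_one m), add_zero]

theorem eulerE_of_odd {n : ℕ} (hn : Odd n) : eulerE n = 0 := if_pos (Nat.odd_iff.mp hn)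

theorem eulerE_two_mul (m : ℕ) : eulerE (2 * m) = eulerEvenAux m := by
  simp [eulerE]

theorem sum_choose_mul_eulerE_two_mul {m : ℕ} (hm : m ≠ 0) :
    ∑ j ∈ range (m + 1), ((2 * m).choose (2 * j) : ℚ) * eulerE (2 * j) = 0 := by
  obtain ⟨m, rfl⟩ := Nat.exists_eq_succ_of_ne_zero hm
  simp only [eulerE_two_mul]
  rw [sum_range_succ, Nat.choose_self, Nat.cast_one, one_mul, eulerEvenAux,
    sum_attach (range (m + 1)) fun j => ((2 * (m + 1)).choose (2 * j) : ℚ) * eulerEvenAux j,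
    add_neg_cancel]

theorem egf_eulerE_mul_coshSeries : egf eulerE * coshSeries ℚ = 1 := by
  ext n
  rw [coshSeries, coeff_egf_mul_egf, coeff_one]
  obtain ⟨m, rfl | rfl⟩ := n.even_or_odd'
  · rw [sum_range_two_mul_add_one_of_odd_eq_zero fun i hi => by simp [eulerE_of_odd hi]]
    simp only [← Nat.mul_sub, even_two_mul, if_true, mul_one]
    rcases eq_or_ne m 0 with rfl | hm
    · simp [eulerE_two_mul, eulerEvenAux]
    · rw [sum_choose_mul_eulerE_two_mul hm, zero_div, if_neg (by lia)]
  · rw [if_neg (by lia), sum_eq_zero, zero_div]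
    intro i hi
    rcases i.even_or_odd with hi' | hi'
    · have : ¬Even (2 * m + 1 - i) := by grind
      rw [if_neg this, mul_zero]
    · rw [eulerE_of_odd hi', mul_zero, zero_mul]

theorem egf_eulerE_sq : egf eulerE ^ 2 = d⁄dX ℚ (tanhSeries ℚ) := by
  rw [derivative_tanhSeries, (eq_inv_iff_mul_eq_one (by simp [constantCoeff_coshSeries])).mpr
    egf_eulerE_mul_coshSeries]

theorem sum_choose_mul_eulerE_mul_eulerE (n : ℕ) :
    ∑ i ∈ range (n + 1), (n.choose i : ℚ) * eulerE i * eulerE (n - i) =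
      2 ^ (n + 2) * (2 ^ (n + 2) - 1) * bernoulli (n + 2) / (n + 2) := by
  have coeff_eq := congrArg (coeff n) egf_eulerE_sq
  have hn : (n ! : ℚ) ≠ 0 := mod_cast n.factorial_ne_zero
  rw [sq, coeff_egf_mul_egf, coeff_derivative, coeff_succ_tanhSeries, Rat.cast_id,
    div_eq_iff hn] at coeff_eq
  rw [coeff_eq, Nat.factorial_succ, Nat.factorial_succ]
  push_cast
  field_simp
  ring

end Euler

/-- For every `k ≥ 0`,
`∑_{j=0}^{k} C(2k,2j) E_{2j} E_{2k−2j} = 2^{2k+1}(2^{2k+2}−1) B_{2k+2}/(k+1)`. -/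
theorem euler_convolution (k : ℕ) :
    ∑ j ∈ Finset.range (k + 1),
        ((Nat.choose (2 * k) (2 * j)) : ℚ) * eulerE (2 * j) * eulerE (2 * k - 2 * j)
      = 2 ^ (2 * k + 1) * (2 ^ (2 * k + 2) - 1) * bernoulli (2 * k + 2) / (k + 1) := by
  rw [← sum_range_two_mul_add_one_of_odd_eq_zero
      (f := fun i => ((2 * k).choose i : ℚ) * eulerE i * eulerE (2 * k - i))
      (fun i hi => by simp [eulerE_of_odd hi]),
    sum_choose_mul_eulerE_mul_eulerE]
  push_cast
  field_simp
  ring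
end

section
/- For every integer k ≥ 2, ∑_{j=0}^{k−2} C(2k,2j+2) (1−2^{−2−2j})(1−2^{2−2k+2j}) B_{2j+2} B_{2k−2j−2} = −(2k−1)(1−2^{−2k}) B_{2k}. (For example, for k = 2 both sides equal 3/32.) -/
/-! The series `S = 2X / (eˣ + 1)` satisfies the Riccati equation `S² = 2 (X S + X S' - S)`, and its
exponential coefficients, the Genocchi numbers, are the numbers `2 (1 - 2ⁿ) Bₙ`. Comparing
coefficients in the equation gives a quadratic recursion for them. At an even index `2k ≥ 4` all
terms involving odd indices vanish, and division by `2²ᵏ⁺²` produces the weights `1 - 2⁻ⁿ`. -/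

open Finset PowerSeries
open scoped Nat

/-- The `n`-th Genocchi number, in terms of the Bernoulli numbers; with this sign convention
`2X / (eˣ + 1)` is the exponential generating function. -/
def genocchi (n : ℕ) : ℚ :=
  2 * (1 - 2 ^ n) * bernoulli n

@[simp]
theorem genocchi_zero : genocchi 0 = 0 := by
  simp [genocchi]

theorem genocchi_eq_zero_of_odd {n : ℕ} (hodd : Odd n) (hn : 1 < n) : genocchi n = 0 := by
  rw [genocchi, bernoulli_eq_zero_of_odd hodd hn, mul_zero]

theorem genocchi_mul_genocchi_eq_zero_of_odd {i j : ℕ} (hi : Odd i) (hj : Odd j)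
    (hij : 2 < i + j) : genocchi i * genocchi j = 0 := by
  rcases (show 1 < i ∨ 1 < j by omega) with h | h
  · rw [genocchi_eq_zero_of_odd hi h, zero_mul]
  · rw [genocchi_eq_zero_of_odd hj h, mul_zero]

theorem one_sub_two_zpow_neg_mul_bernoulli (n : ℕ) :
    (1 - (2 : ℚ) ^ (-(n : ℤ))) * bernoulli n = -genocchi n / 2 ^ (n + 1) := by
  rw [genocchi, zpow_neg, zpow_natCast]
  field_simp
  ring

theorem one_sub_two_zpow_neg_mul_bernoulli_mul (i j : ℕ) :
    (1 - (2 : ℚ) ^ (-(i : ℤ))) * (1 - (2 : ℚ) ^ (-(j : ℤ))) * bernoulli i * bernoulli j =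
      genocchi i * genocchi j / 2 ^ (i + j + 2) := by
  calc
    _ = ((1 - (2 : ℚ) ^ (-(i : ℤ))) * bernoulli i) *
        ((1 - (2 : ℚ) ^ (-(j : ℤ))) * bernoulli j) := by ring
    _ = _ := by
      simp only [one_sub_two_zpow_neg_mul_bernoulli]
      ring

section PowerSeries

variable (A : Type*) [CommRing A] [Algebra ℚ A]

/-- The exponential generating function of the Genocchi numbers, with coefficients in a
`ℚ`-algebra. -/
noncomputable def genocchiPowerSeries : A⟦X⟧ :=
  mk fun n => algebraMap ℚ A (genocchi n / n !)

theorem genocchiPowerSeries_eq_bernoulliPowerSeries_sub_rescale :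
    genocchiPowerSeries A =
      2 * (bernoulliPowerSeries A - rescale (2 : A) (bernoulliPowerSeries A)) := by
  ext n
  rw [← map_ofNat (C (R := A)) 2, coeff_C_mul]
  simp only [genocchiPowerSeries, genocchi, bernoulliPowerSeries, coeff_mk, map_sub, coeff_rescale,
    map_mul, map_pow, map_one, map_ofNat, mul_div_assoc]
  ring

theorem rescale_two_bernoulliPowerSeries_mul_exp_sq_sub_one :
    rescale (2 : A) (bernoulliPowerSeries A) * (exp A ^ 2 - 1) = 2 * X := by
  have h := congrArg (rescale (2 : A)) (bernoulliPowerSeries_mul_exp_sub_one A)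
  rwa [map_mul, map_sub, map_one, rescale_X, map_ofNat, ← Nat.cast_ofNat (R := A),
    ← exp_pow_eq_rescale_exp] at h

theorem genocchiPowerSeries_mul_exp_add_one : genocchiPowerSeries A * (exp A + 1) = 2 * X := by
  have hB := bernoulliPowerSeries_mul_exp_sub_one A
  have hB₂ := rescale_two_bernoulliPowerSeries_mul_exp_sq_sub_one A
  -- Multiplication by `bernoulliPowerSeries A` turns `exp A - 1` into the cancellable factor `X`.
  apply X_mul_cancel
  rw [genocchiPowerSeries_eq_bernoulliPowerSeries_sub_rescale]
  linear_combination
    (2 * X + 2 * rescale (2 : A) (bernoulliPowerSeries A) * (exp A + 1)) * hB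
      - 2 * bernoulliPowerSeries A * hB₂

theorem isUnit_exp_add_one : IsUnit (exp A + 1) := by
  rw [isUnit_iff_constantCoeff, map_add, constantCoeff_exp, map_one, one_add_one_eq_two]
  simpa only [map_ofNat] using (IsUnit.mk0 (2 : ℚ) two_ne_zero).map (algebraMap ℚ A)

theorem genocchiPowerSeries_sq :
    genocchiPowerSeries A ^ 2 =
      2 * (X * genocchiPowerSeries A + X * d⁄dX A (genocchiPowerSeries A)
        - genocchiPowerSeries A) := by
  set S := genocchiPowerSeries A
  have hS : S * (exp A + 1) = 2 * X := genocchiPowerSeries_mul_exp_add_one A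
  have hS' : d⁄dX A S * (exp A + 1) + S * exp A = 2 := by
    have h := congrArg (d⁄dX A) (hS.trans (two_mul X))
    simp only [Derivation.leibniz, map_add, derivative_exp, derivative_X, derivative_one,
      smul_eq_mul] at h
    linear_combination h
  apply (isUnit_exp_add_one A).mul_right_cancel
  linear_combination (S + 2) * hS - 2 * X * hS'

end PowerSeries

theorem factorial_mul_coeff_mk_div_factorial_mul {K : Type*} [Field K] [CharZero K]
    (a b : ℕ → K) (n : ℕ) :
    n ! * coeff n ((mk fun i => a i / i !) * mk fun i => b i / i !) =
      ∑ p ∈ antidiagonal n, n.choose p.1 * a p.1 * b p.2 := by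
  rw [coeff_mul, mul_sum]
  refine sum_congr rfl fun p hp => ?_
  obtain rfl := mem_antidiagonal.mp hp
  rw [coeff_mk, coeff_mk, Nat.cast_add_choose]
  ring

theorem sum_antidiagonal_choose_mul_genocchi (n : ℕ) :
    ∑ p ∈ antidiagonal (n + 1), (n + 1).choose p.1 * genocchi p.1 * genocchi p.2 =
      2 * ((n + 1) * genocchi n + n * genocchi (n + 1)) := by
  have hS : genocchiPowerSeries ℚ = mk fun i => genocchi i / i ! := rfl
  have h := congrArg (coeff (n + 1)) (genocchiPowerSeries_sq ℚ)
  rw [← map_ofNat (C (R := ℚ)) 2, coeff_C_mul, map_sub, map_add, coeff_succ_X_mul,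
    coeff_succ_X_mul, coeff_derivative] at h
  rw [← factorial_mul_coeff_mk_div_factorial_mul, ← hS, ← sq, h, hS]
  simp only [coeff_mk, Nat.factorial_succ, Nat.cast_mul, Nat.cast_succ]
  field_simp
  ring

theorem sum_range_choose_mul_genocchi_eq_sum_antidiagonal {k : ℕ} (hk : 2 ≤ k) :
    ∑ j ∈ range (k - 1),
        (2 * k).choose (2 * j + 2) * genocchi (2 * j + 2) * genocchi (2 * k - 2 * j - 2) =
      ∑ p ∈ antidiagonal (2 * k), (2 * k).choose p.1 * genocchi p.1 * genocchi p.2 := by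
  refine sum_of_injOn (fun j => (2 * j + 2, 2 * k - 2 * j - 2)) ?_ ?_ ?_ fun _ _ => rfl
  · intro i _ j _ h
    grind
  · intro j hj
    grind [Finset.HasAntidiagonal.mem_antidiagonal]
  · rintro ⟨a, b⟩ hab hnot
    rw [HasAntidiagonal.mem_antidiagonal] at hab
    rcases Nat.even_or_odd a with ha | ha
    · obtain rfl | rfl : a = 0 ∨ b = 0 := by
        by_contra! hne
        exact hnot ⟨a / 2 - 1, by grind, by grind⟩
      · simp
      · simp
    · rw [mul_assoc, genocchi_mul_genocchi_eq_zero_of_odd ha (by grind) (by omega), mul_zero]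

theorem sum_range_choose_mul_genocchi {k : ℕ} (hk : 2 ≤ k) :
    ∑ j ∈ range (k - 1),
        (2 * k).choose (2 * j + 2) * genocchi (2 * j + 2) * genocchi (2 * k - 2 * j - 2) =
      2 * (2 * k - 1) * genocchi (2 * k) := by
  obtain ⟨n, hn⟩ : ∃ n, 2 * k = n + 1 := ⟨2 * k - 1, by omega⟩
  have hn_cast : (2 * k : ℚ) = n + 1 := mod_cast hn
  have hodd : genocchi n = 0 := genocchi_eq_zero_of_odd (by grind) (by omega)
  rw [sum_range_choose_mul_genocchi_eq_sum_antidiagonal hk, hn_cast, hn,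
    sum_antidiagonal_choose_mul_genocchi, hodd]
  ring

/-- For every integer `k ≥ 2`,
`∑_{j=0}^{k−2} C(2k,2j+2)(1−2^{−2−2j})(1−2^{2−2k+2j}) B_{2j+2} B_{2k−2j−2}
= −(2k−1)(1−2^{−2k}) B_{2k}`. -/
theorem bernoulli_convolution_identity (k : ℕ) (hk : 2 ≤ k) :
    ∑ j ∈ Finset.range (k - 1),
        ((Nat.choose (2 * k) (2 * j + 2)) : ℚ)
          * (1 - (2 : ℚ) ^ (-2 - 2 * (j : ℤ))) * (1 - (2 : ℚ) ^ (2 - 2 * (k : ℤ) + 2 * j))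
          * bernoulli (2 * j + 2) * bernoulli (2 * k - 2 * j - 2)
      = -((2 * k - 1) : ℚ) * (1 - (2 : ℚ) ^ (-(2 * (k : ℤ)))) * bernoulli (2 * k) := by
  calc
    _ = ∑ j ∈ range (k - 1), (2 * k).choose (2 * j + 2) * genocchi (2 * j + 2)
          * genocchi (2 * k - 2 * j - 2) / 2 ^ (2 * k + 2) := by
      refine sum_congr rfl fun j hj => ?_
      have hjk : j < k - 1 := mem_range.mp hj
      have hpair := one_sub_two_zpow_neg_mul_bernoulli_mul (2 * j + 2) (2 * k - 2 * j - 2)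
      rw [show -((2 * j + 2 : ℕ) : ℤ) = -2 - 2 * j by omega,
        show -((2 * k - 2 * j - 2 : ℕ) : ℤ) = 2 - 2 * k + 2 * j by omega,
        show 2 * j + 2 + (2 * k - 2 * j - 2) + 2 = 2 * k + 2 by omega] at hpair
      linear_combination ((2 * k).choose (2 * j + 2) : ℚ) * hpair
    _ = 2 * (2 * k - 1) * genocchi (2 * k) / 2 ^ (2 * k + 2) := by
      rw [← sum_div, sum_range_choose_mul_genocchi hk]
    _ = -((2 * k - 1) : ℚ) * (-genocchi (2 * k) / 2 ^ (2 * k + 1)) := by ring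
    _ = _ := by
      rw [← one_sub_two_zpow_neg_mul_bernoulli, ← mul_assoc, Nat.cast_mul, Nat.cast_ofNat]
end

section
/- For every integer k ≥ 2, the inequality (1/2)(2k−1)(1−2^{−2k}) ζ(2k) < k (1−2^{3−2k}) ζ(2k−2) holds. -/
/-!
Both sides are Dirichlet series in disguise. With `λ(s) = ∑ (2n+1)⁻ˢ = (1 - 2⁻ˢ) ζ(s)` and
`η(s) = ∑ (-1)ⁿ (n+1)⁻ˢ = (1 - 2¹⁻ˢ) ζ(s)`, the claim for `s = 2k - 2` reads
`(s + 1) λ(s + 2) < (s + 2) η(s)`. The same quantity `ε = 3⁻ˢ / 4` controls both series: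
`λ(s + 2) ≤ 1 + ε` since `∑ (2n+3)⁻² ≤ 1/4`, and `η(s) ≥ 1 - 2⁻ˢ + ε` from the first four terms of
the alternating series, as `4⁻ˢ ≤ (3/4) 3⁻ˢ`. Since `s + 2 ≤ 2ˢ` for `s ≥ 2`,
`(s + 2) (1 - 2⁻ˢ + ε) ≥ s + 1 + (s + 2) ε > (s + 1) (1 + ε)`.
-/

/-- The Riemann zeta function at real arguments `s > 1`, as the sum of its Dirichlet series; it
extends `zetaVal` to real exponents. -/
noncomputable def realZeta (s : ℝ) : ℝ := ∑' n : ℕ, ((n : ℝ) + 1) ^ (-s)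

/-- The Dirichlet lambda function `λ(s)` at real `s > 1`, the part of the zeta series carried by the
odd integers. -/
noncomputable def dirichletLambda (s : ℝ) : ℝ := ∑' n : ℕ, (2 * (n : ℝ) + 1) ^ (-s)

/-- The Dirichlet eta function `η(s)`, the alternating zeta series. As an unconditional sum it is
meaningful only for `s > 1`. -/
noncomputable def dirichletEta (s : ℝ) : ℝ := ∑' n : ℕ, (-1) ^ n * ((n : ℝ) + 1) ^ (-s)

theorem zetaVal_eq_realZeta (m : ℕ) : zetaVal m = realZeta m := by
  have term_eq (n : ℕ) : 1 / ((n : ℝ) + 1) ^ m = ((n : ℝ) + 1) ^ (-(m : ℝ)) := by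
    rw [Real.rpow_neg (by positivity), Real.rpow_natCast, one_div]
  exact tsum_congr term_eq

section DirichletSeries

variable {s : ℝ}

theorem summable_nat_add_one_rpow_neg (hs : 1 < s) :
    Summable fun n : ℕ ↦ ((n : ℝ) + 1) ^ (-s) := by
  have h := (summable_nat_add_iff 1).2 (Real.summable_nat_rpow.2 (neg_lt_neg hs))
  simpa only [Nat.cast_add, Nat.cast_one] using h

theorem summable_two_mul_nat_add_one_rpow_neg (hs : 1 < s) :
    Summable fun n : ℕ ↦ (2 * (n : ℝ) + 1) ^ (-s) := by
  have h := (summable_nat_add_one_rpow_neg hs).comp_injective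
    (mul_right_injective₀ (two_ne_zero' ℕ))
  simpa only [Function.comp_def, Nat.cast_mul, Nat.cast_ofNat] using h

theorem two_mul_nat_add_one_add_one_rpow (n : ℕ) (t : ℝ) :
    (((2 * n + 1 : ℕ) : ℝ) + 1) ^ t = 2 ^ t * ((n : ℝ) + 1) ^ t := by
  rw [← Real.mul_rpow (by positivity) (by positivity)]
  push_cast
  ring_nf

theorem realZeta_eq_dirichletLambda_add (hs : 1 < s) :
    realZeta s = dirichletLambda s + 2 ^ (-s) * realZeta s := by
  have hsum := summable_nat_add_one_rpow_neg hs
  have hodd := summable_two_mul_nat_add_one_rpow_neg hs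
  have h := tsum_even_add_odd (f := fun n : ℕ ↦ ((n : ℝ) + 1) ^ (-s))
    (by simpa only [Nat.cast_mul, Nat.cast_ofNat] using hodd)
    (by simpa only [two_mul_nat_add_one_add_one_rpow] using hsum.mul_left _)
  simp only [two_mul_nat_add_one_add_one_rpow, tsum_mul_left, Nat.cast_mul, Nat.cast_ofNat] at h
  exact h.symm

theorem dirichletEta_eq_dirichletLambda_sub (hs : 1 < s) :
    dirichletEta s = dirichletLambda s - 2 ^ (-s) * realZeta s := by
  have hsum := summable_nat_add_one_rpow_neg hs
  have hodd := summable_two_mul_nat_add_one_rpow_neg hs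
  have heven_sign (n : ℕ) : (-1 : ℝ) ^ (2 * n) = 1 := (even_two_mul n).neg_one_pow
  have hodd_sign (n : ℕ) : (-1 : ℝ) ^ (2 * n + 1) = -1 := (odd_two_mul_add_one n).neg_one_pow
  have h := tsum_even_add_odd (f := fun n : ℕ ↦ (-1) ^ n * ((n : ℝ) + 1) ^ (-s))
    (by simpa only [heven_sign, one_mul, Nat.cast_mul, Nat.cast_ofNat] using hodd)
    (by simpa only [hodd_sign, two_mul_nat_add_one_add_one_rpow] using
      (hsum.mul_left _).mul_left _)
  simp only [heven_sign, hodd_sign, two_mul_nat_add_one_add_one_rpow, tsum_mul_left, one_mul,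
    neg_one_mul, tsum_neg, Nat.cast_mul, Nat.cast_ofNat, ← sub_eq_add_neg] at h
  exact h.symm

theorem one_sub_two_rpow_neg_mul_realZeta (hs : 1 < s) :
    (1 - 2 ^ (-s)) * realZeta s = dirichletLambda s := by
  linear_combination realZeta_eq_dirichletLambda_add hs

theorem one_sub_two_rpow_one_sub_mul_realZeta (hs : 1 < s) :
    (1 - 2 ^ (1 - s)) * realZeta s = dirichletEta s := by
  have two_rpow : (2 : ℝ) ^ (1 - s) = 2 * 2 ^ (-s) := by
    rw [sub_eq_add_neg, Real.rpow_add two_pos, Real.rpow_one]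
  rw [two_rpow]
  linear_combination realZeta_eq_dirichletLambda_add hs - dirichletEta_eq_dirichletLambda_sub hs

end DirichletSeries

theorem sum_range_two_mul_add_three_rpow_neg_two_le (n : ℕ) :
    ∑ i ∈ Finset.range n, (2 * (i : ℝ) + 3) ^ (-2 : ℝ) ≤ 1 / 4 := by
  have term_le (i : ℕ) :
      (2 * (i : ℝ) + 3) ^ (-2 : ℝ)
        ≤ 1 / (4 * ((i : ℝ) + 1)) - 1 / (4 * (((i + 1 : ℕ) : ℝ) + 1)) := by
    rw [Real.rpow_neg (by positivity), Real.rpow_two, Nat.cast_add_one, ← one_div,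
      div_sub_div _ _ (by positivity) (by positivity),
      div_le_div_iff₀ (by positivity) (by positivity)]
    nlinarith
  calc ∑ i ∈ Finset.range n, (2 * (i : ℝ) + 3) ^ (-2 : ℝ)
      ≤ ∑ i ∈ Finset.range n, (1 / (4 * ((i : ℝ) + 1)) - 1 / (4 * (((i + 1 : ℕ) : ℝ) + 1))) :=
        Finset.sum_le_sum fun i _ ↦ term_le i
    _ = 1 / 4 - 1 / (4 * ((n : ℝ) + 1)) := by
        rw [Finset.sum_range_sub' fun i : ℕ ↦ 1 / (4 * ((i : ℝ) + 1))]
        norm_num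
    _ ≤ 1 / 4 := sub_le_self _ (by positivity)

theorem dirichletLambda_add_two_le {s : ℝ} (hs : 0 ≤ s) :
    dirichletLambda (s + 2) ≤ 1 + 3 ^ (-s) / 4 := by
  have term_le (i : ℕ) :
      (2 * ((i + 1 : ℕ) : ℝ) + 1) ^ (-(s + 2)) ≤ 3 ^ (-s) * (2 * (i : ℝ) + 3) ^ (-2 : ℝ) := by
    have base_eq : 2 * ((i + 1 : ℕ) : ℝ) + 1 = 2 * (i : ℝ) + 3 := by push_cast; ring
    rw [base_eq, neg_add, Real.rpow_add (by positivity)]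
    gcongr ?_ * _
    exact Real.rpow_le_rpow_of_nonpos (by norm_num) (by linarith [i.cast_nonneg (α := ℝ)])
      (neg_nonpos.2 hs)
  have tail_le : ∑' i : ℕ, (2 * ((i + 1 : ℕ) : ℝ) + 1) ^ (-(s + 2)) ≤ 3 ^ (-s) / 4 := by
    refine Real.tsum_le_of_sum_range_le (fun i ↦ by positivity) fun n ↦ ?_
    calc ∑ i ∈ Finset.range n, (2 * ((i + 1 : ℕ) : ℝ) + 1) ^ (-(s + 2))
        ≤ 3 ^ (-s) * ∑ i ∈ Finset.range n, (2 * (i : ℝ) + 3) ^ (-2 : ℝ) := by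
          rw [Finset.mul_sum]
          exact Finset.sum_le_sum fun i _ ↦ term_le i
      _ ≤ 3 ^ (-s) * (1 / 4) := by
          gcongr
          exact sum_range_two_mul_add_three_rpow_neg_two_le n
      _ = 3 ^ (-s) / 4 := by ring
  rw [dirichletLambda,
    (summable_two_mul_nat_add_one_rpow_neg (by linarith : 1 < s + 2)).tsum_eq_zero_add]
  simpa using tail_le

theorem sum_range_two_mul_le_dirichletEta {s : ℝ} (hs : 1 < s) (n : ℕ) :
    ∑ i ∈ Finset.range (2 * n), (-1) ^ i * ((i : ℝ) + 1) ^ (-s) ≤ dirichletEta s := by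
  have hanti : Antitone fun i : ℕ ↦ ((i : ℝ) + 1) ^ (-s) := fun i j hij ↦
    Real.rpow_le_rpow_of_nonpos (by positivity) (by gcongr) (by linarith)
  exact hanti.alternating_series_le_tendsto
    (summable_nat_add_one_rpow_neg hs).alternating.tendsto_sum_tsum_nat n

theorem four_rpow_neg_le {s : ℝ} (hs : 1 ≤ s) : (4 : ℝ) ^ (-s) ≤ 3 / 4 * 3 ^ (-s) := by
  have ratio_le : (3 / 4 : ℝ) ^ s ≤ 3 / 4 := by
    simpa using Real.rpow_le_rpow_of_exponent_ge (x := 3 / 4) (by norm_num) (by norm_num) hs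
  calc (4 : ℝ) ^ (-s) = (3 / 4) ^ s * 3 ^ (-s) := by
        rw [Real.div_rpow (by norm_num) (by norm_num), Real.rpow_neg (by norm_num),
          Real.rpow_neg (by norm_num)]
        field_simp
    _ ≤ 3 / 4 * 3 ^ (-s) := by gcongr

theorem one_sub_two_rpow_neg_add_le_dirichletEta {s : ℝ} (hs : 1 < s) :
    1 - 2 ^ (-s) + 3 ^ (-s) / 4 ≤ dirichletEta s := by
  have sum_eq : ∑ i ∈ Finset.range (2 * 2), (-1) ^ i * ((i : ℝ) + 1) ^ (-s)
      = 1 - 2 ^ (-s) + 3 ^ (-s) - 4 ^ (-s) := by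
    norm_num [Finset.sum_range_succ, ← sub_eq_add_neg]
  linarith [sum_range_two_mul_le_dirichletEta hs 2, four_rpow_neg_le hs.le]

theorem add_two_le_two_rpow {s : ℝ} (hs : 2 ≤ s) : s + 2 ≤ 2 ^ s := by
  calc s + 2 ≤ 1 + s / 2 * 3 := by linarith
    _ ≤ (1 + 3) ^ (s / 2) := one_add_mul_self_le_rpow_one_add (by norm_num) (by linarith)
    _ = ((2 : ℝ) ^ (2 : ℝ)) ^ (s / 2) := by norm_num
    _ = 2 ^ s := by rw [← Real.rpow_mul two_pos.le, mul_div_cancel₀ s two_ne_zero]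

theorem add_one_mul_dirichletLambda_lt {s : ℝ} (hs : 2 ≤ s) :
    (s + 1) * dirichletLambda (s + 2) < (s + 2) * dirichletEta s := by
  have hpow : (s + 2) * 2 ^ (-s) ≤ 1 := by
    rw [Real.rpow_neg two_pos.le, ← div_eq_mul_inv]
    exact div_le_one_of_le₀ (add_two_le_two_rpow hs) (by positivity)
  have hpos : (0 : ℝ) < 3 ^ (-s) := by positivity
  calc (s + 1) * dirichletLambda (s + 2) ≤ (s + 1) * (1 + 3 ^ (-s) / 4) := by
        gcongr
        exact dirichletLambda_add_two_le (by linarith)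
    _ < (s + 2) * (1 - 2 ^ (-s) + 3 ^ (-s) / 4) := by linarith
    _ ≤ (s + 2) * dirichletEta s := by
        gcongr
        exact one_sub_two_rpow_neg_add_le_dirichletEta (by linarith)

theorem zeta_inequality_general (k : ℝ) (hk : 2 ≤ k) :
    1 / 2 * (2 * k - 1) * (1 - 2 ^ (-(2 * k))) * realZeta (2 * k)
      < k * (1 - 2 ^ (3 - 2 * k)) * realZeta (2 * k - 2) := by
  have hlambda := one_sub_two_rpow_neg_mul_realZeta (s := 2 * k) (by linarith)
  have heta := one_sub_two_rpow_one_sub_mul_realZeta (s := 2 * k - 2) (by linarith)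
  have h := add_one_mul_dirichletLambda_lt (s := 2 * k - 2) (by linarith)
  rw [sub_add_cancel, ← hlambda, ← heta, show 1 - (2 * k - 2) = 3 - 2 * k by ring] at h
  linarith

/-- For every integer `k ≥ 2`,
`(1/2)(2k−1)(1−2^{−2k}) ζ(2k) < k (1−2^{3−2k}) ζ(2k−2)`. -/
theorem zeta_inequality (k : ℕ) (hk : 2 ≤ k) :
    1 / 2 * (2 * (k : ℝ) - 1) * (1 - (2 : ℝ) ^ (-(2 * (k : ℤ)))) * zetaVal (2 * k)
      < (k : ℝ) * (1 - (2 : ℝ) ^ (3 - 2 * (k : ℤ))) * zetaVal (2 * k - 2) := by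
  simpa [-zpow_neg, zetaVal_eq_realZeta, Nat.cast_sub (by lia : 2 ≤ 2 * k), ← Real.rpow_intCast]
    using zeta_inequality_general k (mod_cast hk)
end
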